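/- arXiv:1603.06493 — 9 statements merged into one kernel-verified Lean document; each statement's English description precedes it below -/
import Mathlib

section
/- Suppose (A, m) is an admissible pair with constant κ. Then the solution set P = {u ∈ ℝ^N : u_i ≥ 0 and f_i(u) ≥ 0 for all i = 1,…,N} of the system of linear inequalities is a compact convex set, and its set of extreme points is exactly {u_I : I ⊆ {1,…,N}}. -/
/-!
All principal minors of `A` are positive, and remain so after adding a nonnegative diagonal matrix.
Hence `d ≥ 0` and `A d ≤ 0` force `d = 0` (`recession_trivial`), so the polytope is bounded.

If `u` vanishes off `J ∪ {k}` and `f = 0` on `J`, Cramer's rule gives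
`Δ_{J,k} = u_k Δ_{J ∪ {k}} + f_k(u) Δ_J` (`minorM_eq`). Applied to `u_I`, this shows `f_i(u_I) > 0` for
`i ∈ I` and `(u_I)_j > 0` for `j ∉ I`. So `u_I` lies in the polytope, and it is extreme because its
tight constraints determine it uniquely.

Conversely, an extreme point `u` cannot have `u_i = f_i(u) = 0` for any `i`: the condition `u_i = 0`
puts `u` in the polytope of the subsystem without `i`, whose extreme points are, by induction, certain
`u_I` with `i ∈ I`, and there `f_i > 0`; Krein–Milman then gives `f_i(u) > 0` (`extreme_subPoly`).
Since no index is tight twice, an index with `u_i ≠ 0 ≠ f_i(u)` would allow moving `u` in both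
directions along a line (`tight_of_extreme`). So each index is tight exactly once, and `u = u_I` with
`I = {i | u_i = 0}`.
-/

open MeasureTheory Filter

/-- Principal minor of `A` over the index set `I`. -/
noncomputable def minorP {N : ℕ} (A : Matrix (Fin N) (Fin N) ℝ) (I : Finset (Fin N)) : ℝ :=
  Matrix.det (Matrix.of fun i j : {x : Fin N // x ∈ I} => A i.1 j.1)

/-- The determinant `Δ_{I,j}` obtained by bordering the principal minor over `I`
with the column `m` and the row `j`. -/
noncomputable def minorM {N : ℕ} (A : Matrix (Fin N) (Fin N) ℝ) (m : Fin N → ℝ)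
    (I : Finset (Fin N)) (j : Fin N) : ℝ :=
  Matrix.det (Matrix.of fun k l : Option {x : Fin N // x ∈ I} =>
    match k, l with
    | some k', some l' => A k'.1 l'.1
    | some k', none => m k'.1
    | none, some l' => A j l'.1
    | none, none => m j)

/-- An admissible pair of coefficients with constant `κ`:
entries of `A` and `m` bounded by `1/κ`, all principal minors `Δ_I ≥ κ`,
and all bordered determinants `Δ_{I,j} ≥ κ` for `j ∉ I`. -/
def IsAdmissible {N : ℕ} (κ : ℝ) (A : Matrix (Fin N) (Fin N) ℝ) (m : Fin N → ℝ) : Prop :=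
  (∀ i j, |A i j| ≤ 1 / κ) ∧ (∀ i, m i ≤ 1 / κ) ∧
    (∀ I : Finset (Fin N), κ ≤ minorP A I) ∧
    (∀ I : Finset (Fin N), ∀ j ∉ I, κ ≤ minorM A m I j)

/-- `f_i(u) = m_i − Σ_j a_{ij} u_j`. -/
def fComp {N : ℕ} (A : Matrix (Fin N) (Fin N) ℝ) (m : Fin N → ℝ) (u : Fin N → ℝ)
    (i : Fin N) : ℝ :=
  m i - ∑ j, A i j * u j

/-! ### Principal and bordered minors -/

/-- The principal submatrix of `A` over `S`, padded to full size by identity rows outside `S`.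
Its determinant is the principal minor `minorP A S` (`minorP_eq_det`), and it lets all
determinants live on the single index type `Fin N`. -/
def padded {N : ℕ} (A : Matrix (Fin N) (Fin N) ℝ) (S : Finset (Fin N)) :
    Matrix (Fin N) (Fin N) ℝ :=
  Matrix.of fun i j => if i ∈ S then A i j else if i = j then 1 else 0

theorem det_instance_irrel {n : Type*} (i₁ i₂ : Fintype n) (d₁ d₂ : DecidableEq n)
    (M : Matrix n n ℝ) : @Matrix.det n d₁ i₁ ℝ _ M = @Matrix.det n d₂ i₂ ℝ _ M := by
  obtain rfl := Subsingleton.elim i₁ i₂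
  obtain rfl := Subsingleton.elim d₁ d₂
  rfl

theorem minorP_eq_det {N : ℕ} (A : Matrix (Fin N) (Fin N) ℝ) (S : Finset (Fin N)) :
    minorP A S = (padded A S).det := by
  rw [Matrix.twoBlockTriangular_det (padded A S) (fun i => i ∈ S)]
  · have h1 : (padded A S).toSquareBlockProp (fun i => i ∈ S)
        = Matrix.of fun i j : {x : Fin N // x ∈ S} => A i.1 j.1 := by
      ext i j
      simp [padded, Matrix.toSquareBlockProp, i.2]
    have h2 : (padded A S).toSquareBlockProp (fun i => ¬ i ∈ S) = 1 := by
      ext i j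
      simp [padded, Matrix.toSquareBlockProp, i.2, Matrix.one_apply, Subtype.ext_iff]
    rw [h1, h2, Matrix.det_one, mul_one]
    exact det_instance_irrel _ _ _ _ _
  · intro i hi j hj
    have : i ≠ j := by rintro rfl; exact hi hj
    simp [padded, hi, this]

/-- The bordered determinant is a principal minor over `J ∪ {k}` of the matrix obtained from `A`
by replacing column `k` with `m`. -/
theorem minorM_eq_minorP {N : ℕ} (A : Matrix (Fin N) (Fin N) ℝ) (m : Fin N → ℝ)
    (J : Finset (Fin N)) (k : Fin N) (hk : k ∉ J) :
    minorM A m J k = minorP (A.updateCol k m) (insert k J) := by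
  unfold minorM minorP
  rw [← Matrix.det_submatrix_equiv_self (Finset.subtypeInsertEquivOption hk).symm]
  congr 1
  have hne : ∀ l : {x : Fin N // x ∈ J}, l.1 ≠ k := by
    rintro ⟨l, hl⟩ rfl
    exact hk hl
  ext a b
  rcases a with _ | a <;> rcases b with _ | b <;>
    simp [Finset.subtypeInsertEquivOption, Matrix.updateCol_apply, hne]

theorem padded_mulVec_mem {N : ℕ} (A : Matrix (Fin N) (Fin N) ℝ) (S : Finset (Fin N))
    (u : Fin N → ℝ) {i : Fin N} (hi : i ∈ S) : (padded A S).mulVec u i = ∑ j, A i j * u j := by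
  simp [Matrix.mulVec, dotProduct, padded, hi]

theorem padded_mulVec_notMem {N : ℕ} (A : Matrix (Fin N) (Fin N) ℝ) (S : Finset (Fin N))
    (u : Fin N → ℝ) {i : Fin N} (hi : i ∉ S) : (padded A S).mulVec u i = u i := by
  simp [Matrix.mulVec, dotProduct, padded, hi]

/-- Cramer's rule behind the positivity of the vertices: if `u` vanishes off `J ∪ {k}` and
`f_j(u) = 0` on `J`, then replacing `m` by `A u + f(u)` in the last column of `Δ_{J,k}` gives
`Δ_{J,k} = u_k Δ_{J ∪ {k}} + f_k(u) Δ_J`. -/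
theorem minorM_eq {N : ℕ} (A : Matrix (Fin N) (Fin N) ℝ) (m : Fin N → ℝ)
    (J : Finset (Fin N)) (k : Fin N) (hk : k ∉ J) (u : Fin N → ℝ)
    (hu : ∀ i ∉ insert k J, u i = 0) (hf : ∀ j ∈ J, fComp A m u j = 0) :
    minorM A m J k = u k * minorP A (insert k J) + fComp A m u k * minorP A J := by
  rw [minorM_eq_minorP A m J k hk]
  simp only [minorP_eq_det]
  set B := padded A (insert k J) with hB
  have h1 : padded (A.updateCol k m) (insert k J)
      = B.updateCol k (B.mulVec u + fComp A m u k • Pi.single k (1 : ℝ)) := by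
    ext i j
    by_cases hj : j = k
    · subst hj
      by_cases hi : i ∈ insert j J
      · have e := padded_mulVec_mem A _ u hi
        rw [← hB] at e
        simp only [Matrix.updateCol_self, Pi.add_apply, e]
        simp only [padded, Matrix.of_apply, if_pos hi, Matrix.updateCol_self]
        rcases Finset.mem_insert.1 hi with rfl | hi'
        · simp [fComp]
        · have := hf i hi'
          have hne : i ≠ j := by rintro rfl; exact hk hi'
          simp [fComp] at this
          simp [hne]
          linarith
      · have e := padded_mulVec_notMem A _ u hi
        rw [← hB] at e
        have hne : i ≠ j := by rintro rfl; simp at hi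
        simp only [Matrix.updateCol_self, Pi.add_apply, e, hu i hi]
        simp only [padded, Matrix.of_apply, if_neg hi, if_neg hne]
        simp [hne]
    · simp [padded, hB, Matrix.updateCol_apply, hj]
  have h2 : B.updateRow k (Pi.single k 1) = padded A J := by
    ext i j
    by_cases hi : i = k
    · subst hi
      simp [padded, hk, Pi.single_apply, eq_comm]
    · simp [padded, hB, Matrix.updateRow_apply, hi]
  rw [h1, ← Matrix.cramer_apply, map_add, map_smul, Matrix.cramer_eq_adjugate_mulVec,
    Matrix.cramer_eq_adjugate_mulVec, Matrix.mulVec_mulVec, Matrix.adjugate_mul]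
  have h3 : (B.adjugate.mulVec (Pi.single k 1)) k = (padded A J).det := by
    rw [← h2, Matrix.mulVec_single_one, Matrix.col_apply, Matrix.adjugate_apply]
  simp only [Pi.add_apply, Pi.smul_apply, h3, Matrix.smul_mulVec, Matrix.one_mulVec, smul_eq_mul]
  ring

/-! ### Matrices with positive principal minors -/

/-- Increasing one diagonal entry of a matrix with positive principal minors keeps them positive:
`Δ_S` grows by `x Δ_{S \ {k}}` when `k ∈ S` and is unchanged otherwise. -/
theorem pos_add_single {N : ℕ} (A : Matrix (Fin N) (Fin N) ℝ)
    (hA : ∀ S, 0 < (padded A S).det) (k : Fin N) (x : ℝ) (hx : 0 ≤ x) (S : Finset (Fin N)) :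
    0 < (padded (A + Matrix.diagonal (Pi.single k x)) S).det := by
  by_cases hk : k ∈ S
  · have h1 : padded (A + Matrix.diagonal (Pi.single k x)) S
        = (padded A S).updateRow k (A k + x • Pi.single k 1) := by
      ext i j
      by_cases hi : i = k
      · subst hi
        by_cases hj : i = j
        · subst hj; simp [padded, hk]
        · simp [padded, hk, Matrix.diagonal_apply, hj, Pi.single_apply, Ne.symm hj]
      · by_cases hS : i ∈ S <;> simp [padded, hi, hS, Matrix.updateRow_apply, Matrix.diagonal_apply]
    have h2 : (padded A S).updateRow k (A k) = padded A S := by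
      ext i j
      by_cases hi : i = k
      · subst hi; simp [padded, hk]
      · simp [Matrix.updateRow_apply, hi]
    have h3 : (padded A S).updateRow k (Pi.single k 1) = padded A (S.erase k) := by
      ext i j
      by_cases hi : i = k
      · subst hi; simp [padded, Pi.single_apply, eq_comm]
      · simp [padded, Matrix.updateRow_apply, hi]
    rw [h1, Matrix.det_updateRow_add, Matrix.det_updateRow_smul, h2, h3]
    have := hA S
    have := mul_nonneg hx (hA (S.erase k)).le
    linarith
  · have h1 : padded (A + Matrix.diagonal (Pi.single k x)) S = padded A S := by
      ext i j
      by_cases hS : i ∈ S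
      · have hi : i ≠ k := by rintro rfl; exact hk hS
        simp [padded, hS, Matrix.diagonal_apply, hi]
      · simp [padded, hS]
    rw [h1]
    exact hA S

theorem pos_add_diagonal {N : ℕ} (A : Matrix (Fin N) (Fin N) ℝ)
    (hA : ∀ S, 0 < (padded A S).det) (D : Fin N → ℝ) (hD : ∀ i, 0 ≤ D i) (S : Finset (Fin N)) :
    0 < (padded (A + Matrix.diagonal D) S).det := by
  have key : ∀ T : Finset (Fin N), ∀ S,
      0 < (padded (A + Matrix.diagonal (∑ k ∈ T, Pi.single k (D k))) S).det := by
    intro T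
    induction T using Finset.induction_on with
    | empty => simpa using hA
    | insert k T hk ih =>
      intro S
      have := pos_add_single _ ih k (D k) (hD k) S
      rw [Finset.sum_insert hk, add_comm (Pi.single (M := fun _ => ℝ) k (D k))]
      rwa [add_assoc, Matrix.diagonal_add] at this
  have := key Finset.univ S
  rwa [Finset.univ_sum_single] at this

theorem eq_zero_of_padded {N : ℕ} (A : Matrix (Fin N) (Fin N) ℝ) (S : Finset (Fin N))
    (hA : 0 < (padded A S).det) (d : Fin N → ℝ) (h0 : ∀ i ∉ S, d i = 0)
    (h1 : ∀ i ∈ S, ∑ j, A i j * d j = 0) : d = 0 := by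
  apply Matrix.eq_zero_of_mulVec_eq_zero hA.ne'
  ext i
  by_cases hi : i ∈ S
  · rw [padded_mulVec_mem A S d hi, h1 i hi]; rfl
  · rw [padded_mulVec_notMem A S d hi, h0 i hi]; rfl

/-- Triviality of the recession cone. If `d ≥ 0` and `A d ≤ 0` on the support of `d`, then
`(A + D) d = 0` on the support for the nonnegative diagonal matrix `D_i = -(A d)_i / d_i`; since
`A + D` still has positive principal minors, `d = 0`. -/
theorem recession_trivial {N : ℕ} (A : Matrix (Fin N) (Fin N) ℝ)
    (hA : ∀ S, 0 < (padded A S).det) (d : Fin N → ℝ) (h0 : ∀ i, 0 ≤ d i)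
    (h1 : ∀ i, 0 < d i → ∑ j, A i j * d j ≤ 0) : d = 0 := by
  classical
  let D : Fin N → ℝ := fun i => if 0 < d i then -(∑ j, A i j * d j) / d i else 0
  have hD : ∀ i, 0 ≤ D i := by
    intro i
    by_cases hi : 0 < d i
    · simp only [D, if_pos hi]
      exact div_nonneg (by linarith [h1 i hi]) hi.le
    · simp [D, hi]
  refine eq_zero_of_padded (A + Matrix.diagonal D) (Finset.univ.filter fun i => 0 < d i)
    (pos_add_diagonal A hA D hD _) d ?_ ?_
  · intro i hi
    simp at hi
    exact le_antisymm hi (h0 i)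
  · intro i hi
    simp at hi
    simp only [Matrix.add_apply, add_mul, Finset.sum_add_distrib, Matrix.diagonal_apply, ite_mul,
      zero_mul, Finset.sum_ite_eq, Finset.mem_univ, if_true]
    simp only [D, if_pos hi]
    field_simp
    ring

/-! ### Convexity and compactness -/

/-- The polytope of the subsystem indexed by `S`, embedded in `ℝ^N` by setting the coordinates
outside `S` to zero; no condition is put on `f_i` for `i ∉ S`. -/
def subPoly {N : ℕ} (A : Matrix (Fin N) (Fin N) ℝ) (m : Fin N → ℝ) (S : Finset (Fin N)) :
    Set (Fin N → ℝ) :=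
  {u | (∀ i ∉ S, u i = 0) ∧ ∀ i ∈ S, 0 ≤ u i ∧ 0 ≤ fComp A m u i}

theorem continuous_fComp {N : ℕ} (A : Matrix (Fin N) (Fin N) ℝ) (m : Fin N → ℝ) (i : Fin N) :
    Continuous fun u => fComp A m u i := by
  unfold fComp; fun_prop

theorem fComp_combo {N : ℕ} (A : Matrix (Fin N) (Fin N) ℝ) (m : Fin N → ℝ) (i : Fin N)
    (x y : Fin N → ℝ) (a b : ℝ) (hab : a + b = 1) :
    fComp A m (a • x + b • y) i = a * fComp A m x i + b * fComp A m y i := by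
  have h : ∑ j, A i j * (a * x j + b * y j)
      = a * ∑ j, A i j * x j + b * ∑ j, A i j * y j := by
    rw [Finset.mul_sum, Finset.mul_sum, ← Finset.sum_add_distrib]
    exact Finset.sum_congr rfl fun j _ => by ring
  simp only [fComp, Pi.add_apply, Pi.smul_apply, smul_eq_mul, h]
  linear_combination (-m i) * hab

theorem convex_subPoly {N : ℕ} (A : Matrix (Fin N) (Fin N) ℝ) (m : Fin N → ℝ)
    (S : Finset (Fin N)) : Convex ℝ (subPoly A m S) := by
  intro x hx y hy a b ha hb hab
  refine ⟨fun i hi => by simp [hx.1 i hi, hy.1 i hi], fun i hi => ⟨?_, ?_⟩⟩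
  · have h1 := mul_nonneg ha (hx.2 i hi).1
    have h2 := mul_nonneg hb (hy.2 i hi).1
    simpa using add_nonneg h1 h2
  · rw [fComp_combo A m i x y a b hab]
    exact add_nonneg (mul_nonneg ha (hx.2 i hi).2) (mul_nonneg hb (hy.2 i hi).2)

theorem isClosed_subPoly {N : ℕ} (A : Matrix (Fin N) (Fin N) ℝ) (m : Fin N → ℝ)
    (S : Finset (Fin N)) : IsClosed (subPoly A m S) := by
  have : subPoly A m S = (⋂ i, ⋂ (_ : i ∉ S), {u | u i = 0}) ∩
      ⋂ i, ⋂ (_ : i ∈ S), ({u | 0 ≤ u i} ∩ {u | 0 ≤ fComp A m u i}) := by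
    ext u
    simp [subPoly]
  rw [this]
  refine IsClosed.inter ?_ ?_
  · exact isClosed_iInter fun i => isClosed_iInter fun _ =>
      isClosed_eq (continuous_apply i) continuous_const
  · exact isClosed_iInter fun i => isClosed_iInter fun _ =>
      (isClosed_le continuous_const (continuous_apply i)).inter
        (isClosed_le continuous_const (continuous_fComp A m i))

/-- On the compact set of nonnegative unit vectors supported in `S`, the function
`φ(d) = ∑_{i ∈ S} max ((A d)_i) 0` is positive since the recession cone is trivial, hence at least
some `c > 0`. By homogeneity `c ‖u‖ ≤ φ(u) ≤ ∑ |m_i|` on the polytope. -/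
theorem isCompact_subPoly {N : ℕ} (A : Matrix (Fin N) (Fin N) ℝ) (m : Fin N → ℝ)
    (hA : ∀ S, 0 < (padded A S).det) (S : Finset (Fin N)) : IsCompact (subPoly A m S) := by
  refine Metric.isCompact_of_isClosed_isBounded (isClosed_subPoly A m S) ?_
  let φ : (Fin N → ℝ) → ℝ := fun d => ∑ i ∈ S, max (∑ j, A i j * d j) 0
  have hφc : Continuous φ := by fun_prop
  let K : Set (Fin N → ℝ) := Metric.sphere 0 1 ∩ {d | ∀ i, 0 ≤ d i} ∩ {d | ∀ i ∉ S, d i = 0}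
  have hK : IsCompact K := by
    refine ((isCompact_sphere 0 1).inter_right ?_).inter_right ?_
    · simp only [Set.ofPred_forall]
      exact isClosed_iInter fun i => isClosed_le continuous_const (continuous_apply i)
    · simp only [Set.ofPred_forall]
      exact isClosed_iInter fun i => isClosed_iInter fun _ =>
        isClosed_eq (continuous_apply i) continuous_const
  have hφpos : ∀ d ∈ K, 0 < φ d := by
    rintro d ⟨⟨hd1, hd2⟩, hd3⟩
    have hnn : 0 ≤ φ d := Finset.sum_nonneg fun i _ => le_max_right _ _
    refine lt_of_le_of_ne hnn fun h => ?_
    have hz := (Finset.sum_eq_zero_iff_of_nonneg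
      (fun i _ => le_max_right (∑ j, A i j * d j) 0)).1 h.symm
    have : d = 0 := recession_trivial A hA d hd2 fun i hi => by
      have hiS : i ∈ S := by
        by_contra hc
        exact hi.ne' (hd3 i hc)
      have := hz i hiS
      exact max_eq_right_iff.1 this
    simp [this] at hd1
  obtain ⟨c, hc, hcK⟩ : ∃ c, 0 < c ∧ ∀ d ∈ K, c ≤ φ d := by
    rcases K.eq_empty_or_nonempty with h | h
    · exact ⟨1, one_pos, by simp [h]⟩
    · obtain ⟨d, hd, hmin⟩ := hK.exists_isMinOn h hφc.continuousOn
      exact ⟨φ d, hφpos d hd, fun e he => hmin he⟩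
  refine isBounded_iff_forall_norm_le.2 ⟨(∑ i, |m i|) / c, fun u hu => ?_⟩
  rw [le_div_iff₀ hc]
  have hbound : φ u ≤ ∑ i, |m i| := by
    refine (Finset.sum_le_sum (g := fun i => |m i|) fun i hi => ?_).trans
      (Finset.sum_le_sum_of_subset_of_nonneg (Finset.subset_univ S) fun i _ _ => abs_nonneg _)
    refine max_le ?_ (abs_nonneg _)
    have := (hu.2 i hi).2
    unfold fComp at this
    linarith [le_abs_self (m i)]
  by_cases hu0 : u = 0
  · subst hu0
    simpa using Finset.sum_nonneg fun i _ => abs_nonneg (m i)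
  have hn : 0 < ‖u‖ := norm_pos_iff.2 hu0
  have hmem : ‖u‖⁻¹ • u ∈ K := by
    refine ⟨⟨?_, fun i => ?_⟩, fun i hi => ?_⟩
    · simp [norm_smul, hn.ne']
    · have : 0 ≤ u i := by
        by_cases hi : i ∈ S
        · exact (hu.2 i hi).1
        · exact (hu.1 i hi).ge
      simp only [Pi.smul_apply, smul_eq_mul]
      positivity
    · simp [hu.1 i hi]
  have hscale : φ u = ‖u‖ * φ (‖u‖⁻¹ • u) := by
    simp only [φ, Finset.mul_sum]
    refine Finset.sum_congr rfl fun i _ => ?_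
    rw [mul_max_of_nonneg _ _ hn.le, mul_zero, Finset.mul_sum]
    congr 1
    refine Finset.sum_congr rfl fun j _ => ?_
    simp only [Pi.smul_apply, smul_eq_mul]
    field_simp
  have := mul_le_mul_of_nonneg_left (hcK _ hmem) hn.le
  linarith

/-! ### Extreme points -/

theorem exists_eps {ι : Type*} [Finite ι] (a b : ι → ℝ) (ha : ∀ i, 0 ≤ a i)
    (hab : ∀ i, a i = 0 → b i = 0) : ∃ ε > 0, ∀ i, ε * |b i| ≤ a i := by
  have h : ∀ᶠ ε in nhdsWithin (0 : ℝ) (Set.Ioi 0), ∀ i, ε * |b i| ≤ a i := by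
    rw [Filter.eventually_all]
    intro i
    rcases (ha i).eq_or_lt with h | h
    · simp [hab i h.symm, ha i]
    · have hc : Continuous fun ε : ℝ => ε * |b i| := by fun_prop
      have := hc.tendsto 0
      simp only [zero_mul] at this
      exact ((this.eventually (gt_mem_nhds h)).filter_mono nhdsWithin_le_nhds).mono
        fun _ h => h.le
  obtain ⟨ε, h1, h2⟩ := (h.and self_mem_nhdsWithin).exists
  exact ⟨ε, h2, h1⟩

section Vertices

variable {N : ℕ} {A : Matrix (Fin N) (Fin N) ℝ} {m : Fin N → ℝ}

/-- If no index of `S` is tight twice at an extreme point of the polytope over `S`, then every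
index of `S` is tight once. Otherwise, with `T` the support of `u` and `i ∈ T` an index with `f_i(u) ≠ 0`,
the solution `d` of `(A d)_i = 1`, `(A d)_j = 0` for `j ∈ T \ {i}`, `d = 0` off `T`, yields a segment
`u ± ε d` inside the polytope. -/
theorem tight_of_extreme (hA : ∀ S, 0 < (padded A S).det) (S : Finset (Fin N)) (u : Fin N → ℝ)
    (hu : u ∈ Set.extremePoints ℝ (subPoly A m S))
    (hS : ∀ i ∈ S, u i = 0 → fComp A m u i ≠ 0) (i : Fin N) (hi : i ∈ S) (hui : u i ≠ 0) :
    fComp A m u i = 0 := by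
  classical
  by_contra hfi
  have hP : u ∈ subPoly A m S := hu.1
  set T := S.filter fun j => u j ≠ 0 with hT
  have hiT : i ∈ T := by simp [hT, hi, hui]
  have hunit : IsUnit (padded A T).det := (hA T).ne'.isUnit
  set d := (padded A T)⁻¹.mulVec (Pi.single i 1) with hd
  have hBd : (padded A T).mulVec d = Pi.single i 1 := by
    rw [hd, Matrix.mulVec_mulVec, Matrix.mul_nonsing_inv _ hunit, Matrix.one_mulVec]
  have hd0 : d ≠ 0 := by
    intro h
    rw [h, Matrix.mulVec_zero] at hBd
    simpa using congrFun hBd i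
  have hdT : ∀ j ∉ T, d j = 0 := by
    intro j hj
    rw [← padded_mulVec_notMem A T d hj, hBd]
    have : j ≠ i := by rintro rfl; exact hj hiT
    simp [this]
  have hAd : ∀ j ∈ T, j ≠ i → ∑ l, A j l * d l = 0 := by
    intro j hj hji
    rw [← padded_mulVec_mem A T d hj, hBd]
    simp [hji]
  obtain ⟨ε₁, hε₁, h1⟩ := exists_eps (fun j : {x // x ∈ S} => u j) (fun j => d j)
    (fun j => (hP.2 j j.2).1) (fun j hj => hdT j (by simp [hT, hj]))
  obtain ⟨ε₂, hε₂, h2⟩ := exists_eps (fun j : {x // x ∈ S} => fComp A m u j)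
    (fun j => ∑ l, A j l * d l) (fun j => (hP.2 j j.2).2) (by
      intro j hj
      refine hAd j ?_ ?_
      · simp only [hT, Finset.mem_filter]
        exact ⟨j.2, fun h => hS j j.2 h hj⟩
      · intro h
        exact hfi (h ▸ hj))
  have hmove : ∀ t : ℝ, |t| ≤ min ε₁ ε₂ → u + t • d ∈ subPoly A m S := by
    intro t ht
    refine ⟨fun j hj => ?_, fun j hj => ⟨?_, ?_⟩⟩
    · have : j ∉ T := by simp [hT, hj]
      simp [hP.1 j hj, hdT j this]
    · have e1 := h1 ⟨j, hj⟩
      have e2 : |t * d j| ≤ ε₁ * |d j| := by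
        rw [abs_mul]
        exact mul_le_mul_of_nonneg_right (ht.trans (min_le_left _ _)) (abs_nonneg _)
      have := neg_abs_le (t * d j)
      simp only [Pi.add_apply, Pi.smul_apply, smul_eq_mul]
      simp only at e1
      linarith
    · have e1 := h2 ⟨j, hj⟩
      set w := ∑ l, A j l * d l with hw
      have e2 : |t * w| ≤ ε₂ * |w| := by
        rw [abs_mul]
        exact mul_le_mul_of_nonneg_right (ht.trans (min_le_right _ _)) (abs_nonneg _)
      have e3 : fComp A m (u + t • d) j = fComp A m u j - t * w := by
        simp only [fComp, Pi.add_apply, Pi.smul_apply, smul_eq_mul, mul_add,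
          Finset.sum_add_distrib, hw, Finset.mul_sum]
        have : ∑ l, A j l * (t * d l) = ∑ l, t * (A j l * d l) :=
          Finset.sum_congr rfl fun l _ => by ring
        rw [this]
        ring
      have := le_abs_self (t * w)
      rw [e3]
      simp only at e1
      linarith
  set ε := min ε₁ ε₂ with hε
  have hε0 : 0 < ε := lt_min hε₁ hε₂
  have ha := hmove ε (abs_of_pos hε0).le
  have hb := hmove (-ε) (by rw [abs_neg, abs_of_pos hε0])
  have hseg : u ∈ openSegment ℝ (u + ε • d) (u + (-ε) • d) := by
    refine ⟨1 / 2, 1 / 2, by norm_num, by norm_num, by norm_num, ?_⟩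
    ext j
    simp
    ring
  have := hu.2 ha hb hseg
  have h0 : ε • d = 0 := by simpa using this
  rcases smul_eq_zero.1 h0 with h | h
  · exact hε0.ne' h
  · exact hd0 h

/-- The points `u_I` are strictly complementary. -/
theorem vertex_pos (hA : ∀ S, 0 < minorP A S) (hM : ∀ J, ∀ k ∉ J, 0 < minorM A m J k)
    (I : Finset (Fin N)) (u : Fin N → ℝ) (h0 : ∀ i ∈ I, u i = 0)
    (hf : ∀ j ∉ I, fComp A m u j = 0) :
    (∀ i ∈ I, 0 < fComp A m u i) ∧ ∀ j ∉ I, 0 < u j := by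
  constructor
  · intro i hi
    have h := minorM_eq A m Iᶜ i (by simpa using hi) u
      (fun j hj => h0 j (by simp at hj; exact hj.2)) (fun j hj => hf j (by simpa using hj))
    rw [h0 i hi, zero_mul, zero_add] at h
    have hpos := hM Iᶜ i (by simpa using hi)
    rw [h] at hpos
    exact pos_of_mul_pos_left hpos (hA _).le
  · intro i hi
    have h := minorM_eq A m (Iᶜ.erase i) i (by simp) u
      (fun j hj => h0 j (by
        by_contra hc
        exact hj (by by_cases hji : j = i <;> simp [hji, hc])))
      (fun j hj => hf j (by simp at hj; exact hj.2))
    rw [hf i hi, zero_mul, add_zero] at h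
    have hpos := hM (Iᶜ.erase i) i (by simp)
    rw [h] at hpos
    exact pos_of_mul_pos_left hpos (hA _).le

theorem vertex_unique (hA : ∀ S, 0 < (padded A S).det) (I : Finset (Fin N)) (u v : Fin N → ℝ)
    (hu : ∀ i ∈ I, u i = 0) (hfu : ∀ j ∉ I, fComp A m u j = 0)
    (hv : ∀ i ∈ I, v i = 0) (hfv : ∀ j ∉ I, fComp A m v j = 0) : u = v := by
  refine sub_eq_zero.1 (eq_zero_of_padded A Iᶜ (hA _) (u - v) ?_ ?_)
  · intro i hi
    have : i ∈ I := by simpa using hi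
    simp [hu i this, hv i this]
  · intro i hi
    have : i ∉ I := by simpa using hi
    have e1 := hfu i this
    have e2 := hfv i this
    simp only [fComp] at e1 e2
    simp only [Pi.sub_apply, mul_sub, Finset.sum_sub_distrib]
    linarith

/-- Extreme points of the polytope over `S` are among the `u_I` with `Sᶜ ⊆ I`. By induction on
`S`: a point of the polytope with `u_i = 0`, `i ∈ S`, lies in the polytope over `S \ {i}`, whose
extreme points are `u_I` with `i ∈ I`; there `f_i` is positive, so by Krein–Milman `f_i(u) > 0`.
Thus no index is tight twice. -/
theorem extreme_subPoly (hA : ∀ S, 0 < (padded A S).det)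
    (uI : Finset (Fin N) → Fin N → ℝ)
    (huI : ∀ I : Finset (Fin N), (∀ i ∈ I, uI I i = 0) ∧ ∀ j ∉ I, fComp A m (uI I) j = 0)
    (hpos : ∀ I, ∀ i ∈ I, 0 < fComp A m (uI I) i) (S : Finset (Fin N)) :
    ∀ u ∈ Set.extremePoints ℝ (subPoly A m S), ∃ I, Sᶜ ⊆ I ∧ u = uI I := by
  classical
  induction S using Finset.strongInduction with
  | H S ih =>
  intro u hu
  have hP : u ∈ subPoly A m S := hu.1
  have hS : ∀ i ∈ S, u i = 0 → fComp A m u i ≠ 0 := by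
    intro i hi hui
    have hmem : u ∈ subPoly A m (S.erase i) := by
      refine ⟨fun j hj => ?_, fun j hj => hP.2 j (Finset.mem_of_mem_erase hj)⟩
      by_cases hji : j = i
      · rw [hji, hui]
      · exact hP.1 j fun h => hj (Finset.mem_erase.2 ⟨hji, h⟩)
    obtain ⟨I₀, hI₀, hmin⟩ := (Finset.univ.filter fun I : Finset (Fin N) => i ∈ I).exists_min_image
      (fun I => fComp A m (uI I) i) ⟨{i}, by simp⟩
    set c := fComp A m (uI I₀) i with hc
    have hc0 : 0 < c := hpos I₀ i (by simpa using hI₀)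
    have hclosed : IsClosed {v : Fin N → ℝ | c ≤ fComp A m v i} :=
      isClosed_le continuous_const (continuous_fComp A m i)
    have hconv : Convex ℝ {v : Fin N → ℝ | c ≤ fComp A m v i} := by
      intro x hx y hy a b ha hb hab
      simp only [Set.mem_ofPred_eq] at *
      rw [fComp_combo A m i x y a b hab]
      have h1 := mul_le_mul_of_nonneg_left hx ha
      have h2 := mul_le_mul_of_nonneg_left hy hb
      have h3 : a * c + b * c = c := by rw [← add_mul, hab, one_mul]
      linarith
    have hsub : subPoly A m (S.erase i) ⊆ {v : Fin N → ℝ | c ≤ fComp A m v i} := by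
      rw [← closure_convexHull_extremePoints (isCompact_subPoly A m hA (S.erase i))
        (convex_subPoly A m (S.erase i))]
      refine closure_minimal (convexHull_min ?_ hconv) hclosed
      intro v hv
      obtain ⟨I, hI, rfl⟩ := ih (S.erase i) (Finset.erase_ssubset hi) v hv
      exact hmin I (by simpa using hI (by simp))
    exact (hc0.trans_le (hsub hmem)).ne'
  refine ⟨Finset.univ.filter fun i => u i = 0, ?_, ?_⟩
  · intro i hi
    simpa using hP.1 i (by simpa using hi)
  · refine vertex_unique (m := m) hA (Finset.univ.filter fun i => u i = 0) _ _ ?_ ?_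
      (huI _).1 (huI _).2
    · intro i hi
      simpa using hi
    · intro i hi
      have hui : u i ≠ 0 := by simpa using hi
      have hiS : i ∈ S := by
        by_contra h
        exact hui (hP.1 i h)
      exact tight_of_extreme hA S u hu hS i hiS hui

end Vertices

/-- For an admissible pair `(A, m)`, the solution set
`P = {u : u_i ≥ 0 and f_i(u) ≥ 0 for all i}` is a compact convex set whose set of extreme
points is exactly `{u_I : I ⊆ {1,…,N}}`, where `u_I` solves `u_i = 0 (i ∈ I)`,
`f_j(u) = 0 (j ∉ I)`. -/
theorem polytope_compact_convex_extremePoints {N : ℕ} (hN : 0 < N) (κ : ℝ) (hκ : 0 < κ)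
    (A : Matrix (Fin N) (Fin N) ℝ) (m : Fin N → ℝ) (hAm : IsAdmissible κ A m)
    (uI : Finset (Fin N) → Fin N → ℝ)
    (huI : ∀ I : Finset (Fin N), (∀ i ∈ I, uI I i = 0) ∧ ∀ j ∉ I, fComp A m (uI I) j = 0) :
    IsCompact {u : Fin N → ℝ | ∀ i, 0 ≤ u i ∧ 0 ≤ fComp A m u i} ∧
    Convex ℝ {u : Fin N → ℝ | ∀ i, 0 ≤ u i ∧ 0 ≤ fComp A m u i} ∧
    Set.extremePoints ℝ {u : Fin N → ℝ | ∀ i, 0 ≤ u i ∧ 0 ≤ fComp A m u i} =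
      {u : Fin N → ℝ | ∃ I : Finset (Fin N), u = uI I} := by
  obtain ⟨-, -, hA', hM'⟩ := hAm
  have hA : ∀ S, 0 < minorP A S := fun S => hκ.trans_le (hA' S)
  have hM : ∀ J, ∀ k ∉ J, 0 < minorM A m J k := fun J k hk => hκ.trans_le (hM' J k hk)
  have hB : ∀ S, 0 < (padded A S).det := fun S => minorP_eq_det A S ▸ hA S
  have hpos := fun I => vertex_pos hA hM I (uI I) (huI I).1 (huI I).2
  have hset : {u : Fin N → ℝ | ∀ i, 0 ≤ u i ∧ 0 ≤ fComp A m u i} = subPoly A m Finset.univ := by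
    ext u
    simp [subPoly]
  rw [hset]
  refine ⟨isCompact_subPoly A m hB _, convex_subPoly A m _, Set.Subset.antisymm ?_ ?_⟩
  · intro u hu
    obtain ⟨I, -, h⟩ := extreme_subPoly hB uI huI (fun I => (hpos I).1) Finset.univ u hu
    exact ⟨I, h⟩
  · rintro _ ⟨I, rfl⟩
    rw [← hset]
    refine ⟨fun i => ?_, ?_⟩
    · by_cases hi : i ∈ I
      · exact ⟨((huI I).1 i hi).ge, ((hpos I).1 i hi).le⟩
      · exact ⟨((hpos I).2 i hi).le, ((huI I).2 i hi).ge⟩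
    · rintro x hx y hy ⟨a, b, ha, hb, hab, hxy⟩
      -- A nonnegative quantity vanishing at a point of the open segment vanishes at its endpoint.
      have key : ∀ p q : ℝ, 0 ≤ p → 0 ≤ q → a * p + b * q = 0 → p = 0 := by
        intro p q hp hq h
        have h1 := mul_nonneg ha.le hp
        have h2 := mul_nonneg hb.le hq
        have h3 : a * p = 0 := by linarith
        exact (mul_eq_zero.1 h3).resolve_left ha.ne'
      refine vertex_unique (m := m) hB I _ _ ?_ ?_ (huI I).1 (huI I).2
      · intro i hi
        refine key (x i) (y i) (hx i).1 (hy i).1 ?_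
        have := congrFun hxy i
        simpa [(huI I).1 i hi] using this
      · intro i hi
        refine key _ _ (hx i).2 (hy i).2 ?_
        rw [← fComp_combo A m i x y a b hab, hxy]
        exact (huI I).2 i hi
end

section
/- Let A = (a_{ij}) be an N×N real matrix all of whose principal minors are positive, i.e. for every nonempty index set I = {i_1 < … < i_r} ⊆ {1,…,N} one has det((a_{i_k i_l})_{k,l=1}^r) > 0. Then the only vector u ∈ ℝ^N satisfying u_i ≥ 0 for all i and Σ_{j=1}^N a_{ij} u_j ≤ 0 for all i is u = 0. -/
/-!
Let `I` be the support of `u` and let `d i = -(A u)_i / u_i ≥ 0` for `i ∈ I`, `d i = 0` otherwise.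
Rows `i ∈ I` of `A + diagonal d` annihilate `u`, so the principal submatrix of `A + diagonal d`
on `I` kills the restriction of `u`. On the other hand, adding a nonnegative number to one diagonal
entry keeps all principal minors positive: by linearity of the determinant in that row, the minor
on `I` increases by `d i` times the minor on `I \ {i}` (`det_borderedRows_pos`). Hence that
submatrix is invertible and `u = 0`.

To avoid changing index types, the minor on `I` is computed as the determinant of the full-size
matrix in which the rows outside `I` are replaced by those of the identity.
-/

/-- The matrix `A` with the rows outside `I` replaced by the corresponding rows of the identity.
Its determinant is the principal minor of `A` on `I`. -/
def borderedRows {N : ℕ} (A : Matrix (Fin N) (Fin N) ℝ) (I : Finset (Fin N)) :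
    Matrix (Fin N) (Fin N) ℝ :=
  Matrix.of fun i => if i ∈ I then A i else Pi.single i 1

lemma det_borderedRows {N : ℕ} (A : Matrix (Fin N) (Fin N) ℝ) (I : Finset (Fin N)) :
    (borderedRows A I).det =
      Matrix.det (Matrix.of fun i j : {x : Fin N // x ∈ I} => A i.1 j.1) := by
  rw [Matrix.twoBlockTriangular_det (borderedRows A I) (fun x => x ∈ I)]
  · have h1 : Matrix.toSquareBlockProp (borderedRows A I) (fun x => x ∈ I) =
        Matrix.of fun i j : {x : Fin N // x ∈ I} => A i.1 j.1 := by
      ext i j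
      simp [Matrix.toSquareBlockProp, borderedRows, i.2]
    have h2 : Matrix.toSquareBlockProp (borderedRows A I) (fun x => ¬ x ∈ I) = 1 := by
      ext i j
      simp [Matrix.toSquareBlockProp, borderedRows, i.2, Matrix.one_apply, Pi.single_apply,
        Subtype.ext_iff, eq_comm]
    rw [h1, h2, Matrix.det_one, mul_one]
    -- The two sides differ only in the instances on the index type `{x // x ∈ I}`.
    congr!
  · intro i hi j hj
    have hne : j ≠ i := fun h => hi (h ▸ hj)
    simp [borderedRows, hi, hne]

/-- Positivity of all principal minors is preserved when nonnegative numbers `d i` are added to the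
diagonal entries with index in `s`; the induction on `s` treats one diagonal entry at a time. -/
lemma det_borderedRows_pos {N : ℕ} (A : Matrix (Fin N) (Fin N) ℝ)
    (hA : ∀ I, 0 < (borderedRows A I).det) (d : Fin N → ℝ) (hd : ∀ i, 0 ≤ d i)
    (s : Finset (Fin N)) :
    ∀ I, 0 < (borderedRows (A + Matrix.diagonal fun i => if i ∈ s then d i else 0) I).det := by
  induction s using Finset.induction_on with
  | empty => simpa using hA
  | insert k s hk ih =>
    intro I
    set B := A + Matrix.diagonal fun i => if i ∈ s then d i else 0 with hB
    by_cases hkI : k ∈ I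
    · have key : borderedRows (A + Matrix.diagonal fun i => if i ∈ insert k s then d i else 0) I =
          (borderedRows B I).updateRow k (borderedRows B I k + d k • Pi.single k 1) := by
        ext i j
        by_cases hik : i = k
        · subst hik
          by_cases hij : i = j
          · subst hij
            simp [borderedRows, hB, hkI, hk]
          · simp [borderedRows, hB, hkI, hij, Ne.symm hij]
        · by_cases hi : i ∈ I <;> simp [borderedRows, hB, hik, hi, Matrix.diagonal_apply]
      have herase : (borderedRows B I).updateRow k (Pi.single k 1) =
          borderedRows B (I.erase k) := by
        ext i j
        by_cases hik : i = k
        · subst hik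
          simp [borderedRows]
        · simp [borderedRows, hik]
      rw [key, Matrix.det_updateRow_add, Matrix.det_updateRow_smul, Matrix.updateRow_eq_self,
        herase]
      exact add_pos_of_pos_of_nonneg (ih I) (mul_nonneg (hd k) (ih _).le)
    · have key : borderedRows (A + Matrix.diagonal fun i => if i ∈ insert k s then d i else 0) I =
          borderedRows B I := by
        ext i j
        by_cases hi : i ∈ I
        · have hik : i ≠ k := fun h => hkI (h ▸ hi)
          simp [borderedRows, hB, hi, hik, Matrix.diagonal_apply]
        · simp [borderedRows, hi]
      rw [key]
      exact ih I

/-- If all principal minors of the `N × N` real matrix `A` are positive, then the only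
nonnegative vector `u` with `A u ≤ 0` componentwise is `u = 0`. -/
theorem positive_principal_minors_imp_trivial_nonneg_solution {N : ℕ}
    (A : Matrix (Fin N) (Fin N) ℝ)
    (hA : ∀ I : Finset (Fin N), I.Nonempty →
      0 < Matrix.det (Matrix.of fun i j : {x : Fin N // x ∈ I} => A i.1 j.1))
    (u : Fin N → ℝ) (hu : ∀ i, 0 ≤ u i) (hAu : ∀ i, ∑ j, A i j * u j ≤ 0) :
    u = 0 := by
  have hA' : ∀ I, 0 < (borderedRows A I).det := by
    intro I
    rw [det_borderedRows]
    rcases I.eq_empty_or_nonempty with rfl | hI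
    · simp
    · exact hA I hI
  -- Where `u i = 0` the quotient is `0` by the division convention, as desired.
  let d : Fin N → ℝ := fun i => -(∑ j, A i j * u j) / u i
  have hd : ∀ i, 0 ≤ d i := fun i => div_nonneg (neg_nonneg.2 (hAu i)) (hu i)
  have hpos := det_borderedRows_pos A hA' d hd Finset.univ (Finset.univ.filter fun i => u i ≠ 0)
  refine Matrix.eq_zero_of_mulVec_eq_zero hpos.ne' ?_
  ext i
  by_cases hi : u i = 0
  · simp [borderedRows, Matrix.mulVec, hi]
  · have hdi : d i * u i = -(∑ j, A i j * u j) := div_mul_cancel₀ _ hi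
    simp [borderedRows, Matrix.mulVec, dotProduct, hi, add_mul, Finset.sum_add_distrib,
      Matrix.diagonal_apply, hdi]
end

section
/- There exists σ > 0, depending only on N and κ, such that for every admissible pair (A, m) with constant κ, every index j ∈ {1,…,N}, and every u = (u_1,…,u_N) ∈ ℝ^N with u ≥ 0, u_j ≤ σ and f_j(u) ≤ σ, one has min_{1 ≤ i ≤ N} f_i(u) ≤ −σ. -/
/-!
Suppose `f_i(u) > -σ` for every `i` and put `w_i = f_i(u) + σ > 0`, `t_i = u_i + w_i > 0`,
`p_i = u_i / t_i ∈ [0, 1]`. Let `P` be the matrix whose `i`-th column is the convex combination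
`(1 - p_i) e_i + p_i A_i` of the unit vector `e_i` and the `i`-th column of `A`. By definition of
`f`, `P t = m + σ 𝟙`, so Cramer's rule gives

`t_j det P = det (P with column j replaced by m) + σ det (P with column j replaced by 𝟙)`.

The entries of `P` are at most `1 + 1/κ`, so both `det P` and the last determinant are at most
`C = N! (1 + 1/κ)^N` in absolute value. The first determinant on the right is affine in each `p_i`,
so it is bounded below by its values for `p ∈ {0, 1}^N` (`le_det_mixed`). For such `p`, equal to
the indicator of a set `I ∌ j` off the index `j`, it is exactly `Δ_{I,j}` (`det_mixed_vertex`),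
hence at least `κ`. Therefore `t_j C ≥ κ - σ C`, whereas `u_j ≤ σ` and `f_j(u) ≤ σ` give
`t_j ≤ 3σ`. This is impossible for `σ = κ / (5 C)`.
-/

open MeasureTheory Filter

/-- The matrix whose `k`-th column is `(1 - p k) e_k + p k A_k`. -/
def mixed {N : ℕ} (A : Matrix (Fin N) (Fin N) ℝ) (p : Fin N → ℝ) : Matrix (Fin N) (Fin N) ℝ :=
  Matrix.of fun i k => (1 - p k) * (1 : Matrix (Fin N) (Fin N) ℝ) i k + p k * A i k

/-- Off the index set `I ∪ {j}` the columns are unit vectors, so the determinant reduces to the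
block over `I ∪ {j}`, which is the bordered minor. -/
lemma det_mixed_vertex {N : ℕ} (A : Matrix (Fin N) (Fin N) ℝ) (m : Fin N → ℝ)
    (I : Finset (Fin N)) (j : Fin N) (hj : j ∉ I) (p : Fin N → ℝ)
    (h1 : ∀ k ∈ I, p k = 1) (h0 : ∀ k, k ∉ I → k ≠ j → p k = 0) :
    ((mixed A p).updateCol j m).det = minorM A m I j := by
  classical
  rw [Matrix.twoBlockTriangular_det' _ (fun k => k = j ∨ k ∈ I)]
  · have hone : Matrix.toSquareBlockProp ((mixed A p).updateCol j m)
        (fun k => ¬ (k = j ∨ k ∈ I)) = 1 := by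
      ext ⟨a, ha⟩ ⟨b, hb⟩
      simp only [not_or] at ha hb
      simp [Matrix.toSquareBlockProp_def, mixed, Matrix.updateCol_apply, hb.1,
        h0 b hb.2 hb.1, Matrix.one_apply]
    rw [hone, Matrix.det_one, mul_one, minorM]
    let e : Option {x : Fin N // x ∈ I} ≃ {x : Fin N // x = j ∨ x ∈ I} :=
      Equiv.ofBijective
        (fun o => match o with
          | none => ⟨j, Or.inl rfl⟩
          | some x => ⟨x.1, Or.inr x.2⟩) (by
        constructor
        · rintro (_ | ⟨x, hx⟩) (_ | ⟨y, hy⟩) h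
          · rfl
          · simp only [Subtype.mk.injEq] at h
            exact absurd (h ▸ hy) hj
          · simp only [Subtype.mk.injEq] at h
            exact absurd (h ▸ hx) hj
          · simp only [Subtype.mk.injEq] at h
            subst h
            rfl
        · rintro ⟨x, hx⟩
          rcases hx with h | h
          · exact ⟨none, by simp [h]⟩
          · exact ⟨some ⟨x, h⟩, rfl⟩)
    have he0 : (e none).1 = j := rfl
    have he1 : ∀ x, (e (some x)).1 = x.1 := fun _ => rfl
    refine (Matrix.det_submatrix_equiv_self e _).symm.trans ?_
    congr 1
    ext a b
    rcases b with _ | ⟨b, hb⟩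
    · rcases a with _ | ⟨a, ha⟩ <;>
        simp [he0, he1, Matrix.toSquareBlockProp_def]
    · have hbj : b ≠ j := fun h => hj (h ▸ hb)
      rcases a with _ | ⟨a, ha⟩ <;>
        simp [he0, he1, Matrix.toSquareBlockProp_def, mixed, Matrix.updateCol_apply, hbj, h1 b hb]
  · intro a ha b hb
    simp only [not_or] at hb
    have hab : a ≠ b := by
      rintro rfl
      simp [hb.1, hb.2] at ha
    simp [mixed, hb.1, h0 b hb.2 hb.1, hab]

/-- The determinant is an affine function of each `p i`, `i ≠ j`. -/
lemma det_mixed_affine {N : ℕ} (A : Matrix (Fin N) (Fin N) ℝ) (m : Fin N → ℝ)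
    (j i : Fin N) (hij : i ≠ j) (p : Fin N → ℝ) :
    ((mixed A p).updateCol j m).det =
      (1 - p i) * ((mixed A (Function.update p i 0)).updateCol j m).det +
        p i * ((mixed A (Function.update p i 1)).updateCol j m).det := by
  set Q := (mixed A p).updateCol j m with hQ
  have key : ∀ c : ℝ, (mixed A (Function.update p i c)).updateCol j m =
      Q.updateCol i (fun k => (1 - c) * (1 : Matrix (Fin N) (Fin N) ℝ) k i + c * A k i) := by
    intro c
    ext a b
    by_cases hb : b = i
    · subst hb
      simp [mixed, hij]
    · by_cases hbj : b = j
      · subst hbj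
        simp [hQ, hb]
      · simp [hQ, mixed, hb, hbj]
  have hself : Q = Q.updateCol i ((1 - p i) • (fun k => (1 : Matrix (Fin N) (Fin N) ℝ) k i) +
      p i • fun k => A k i) := by
    have := key (p i)
    rw [Function.update_eq_self, ← hQ] at this
    exact this
  rw [key 0, key 1]
  conv_lhs => rw [hself]
  rw [Matrix.det_updateCol_add, Matrix.det_updateCol_smul, Matrix.det_updateCol_smul]
  simp

/-- The induction is on the set `S` of indices at which `p` may fail to be `0` or `1`. -/
lemma le_det_mixed {N : ℕ} {κ : ℝ} {A : Matrix (Fin N) (Fin N) ℝ} {m : Fin N → ℝ}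
    (h : ∀ I : Finset (Fin N), ∀ j ∉ I, κ ≤ minorM A m I j) (j : Fin N) (S : Finset (Fin N)) :
    ∀ p : Fin N → ℝ, (∀ i, 0 ≤ p i ∧ p i ≤ 1) →
      (∀ i, i ∉ S → i ≠ j → p i = 0 ∨ p i = 1) →
      κ ≤ ((mixed A p).updateCol j m).det := by
  classical
  induction S using Finset.induction_on with
  | empty =>
    intro p _ hS
    let I : Finset (Fin N) := Finset.univ.filter fun k => k ≠ j ∧ p k = 1
    have hjI : j ∉ I := by simp [I]
    rw [det_mixed_vertex A m I j hjI p (fun k hk => (Finset.mem_filter.mp hk).2.2)]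
    · exact h I j hjI
    · intro k hk hkj
      refine (hS k (Finset.notMem_empty k) hkj).resolve_right fun h1 => hk ?_
      simp [I, hkj, h1]
  | insert i S _ ih =>
    intro p hp hS
    by_cases hij : i = j
    · refine ih p hp fun k hk hkj => hS k ?_ hkj
      simp [hk, hij, hkj]
    · have hend : ∀ c : ℝ, c = 0 ∨ c = 1 →
          κ ≤ ((mixed A (Function.update p i c)).updateCol j m).det := by
        intro c hc
        apply ih
        · intro k
          by_cases hk : k = i
          · subst hk
            rcases hc with rfl | rfl <;> simp
          · simpa [hk] using hp k
        · intro k hk hkj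
          by_cases hki : k = i
          · subst hki
            simpa using hc
          · simpa [hki] using hS k (by simp [hki, hk]) hkj
      rw [det_mixed_affine A m j i hij p]
      have h0 := mul_le_mul_of_nonneg_left (hend 0 (Or.inl rfl)) (sub_nonneg.mpr (hp i).2)
      have h1 := mul_le_mul_of_nonneg_left (hend 1 (Or.inr rfl)) (hp i).1
      linarith

lemma abs_mixed_le {N : ℕ} {κ : ℝ} (hκ : 0 < κ) {A : Matrix (Fin N) (Fin N) ℝ}
    (hA : ∀ i j, |A i j| ≤ 1 / κ) {p : Fin N → ℝ} (hp : ∀ i, 0 ≤ p i ∧ p i ≤ 1)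
    (i k : Fin N) : |mixed A p i k| ≤ 1 + 1 / κ := by
  have hk := hp k
  have hone : |(1 : Matrix (Fin N) (Fin N) ℝ) i k| ≤ 1 := by
    rw [Matrix.one_apply]
    split_ifs <;> simp
  have hinv : 0 < 1 / κ := by positivity
  calc |mixed A p i k|
      ≤ |(1 - p k) * (1 : Matrix (Fin N) (Fin N) ℝ) i k| + |p k * A i k| := abs_add_le _ _
    _ = (1 - p k) * |(1 : Matrix (Fin N) (Fin N) ℝ) i k| + p k * |A i k| := by
        rw [abs_mul, abs_mul, abs_of_nonneg hk.1, abs_of_nonneg (sub_nonneg.mpr hk.2)]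
    _ ≤ (1 - p k) * 1 + p k * (1 / κ) := by
        have := mul_le_mul_of_nonneg_left hone (sub_nonneg.mpr hk.2)
        have := mul_le_mul_of_nonneg_left (hA i k) hk.1
        linarith
    _ ≤ 1 + 1 / κ := by nlinarith

lemma abs_det_le {N : ℕ} {M : Matrix (Fin N) (Fin N) ℝ} {B : ℝ} (hM : ∀ i k, |M i k| ≤ B) :
    |M.det| ≤ (N.factorial : ℝ) * B ^ N := by
  have := Matrix.det_le (A := M) (abv := AbsoluteValue.abs) (x := B) hM
  simpa [nsmul_eq_mul] using this

/-- There is `σ > 0`, depending only on `N` and `κ`, such that for every admissible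
pair `(A, m)` with constant `κ`, every index `j`, and every nonnegative `u` with `u j ≤ σ`
and `f_j(u) ≤ σ`, one has `min_i f_i(u) ≤ -σ`. -/
theorem exists_sigma_min_f_le_neg_sigma {N : ℕ} (hN : 0 < N) (κ : ℝ) (hκ : 0 < κ) :
    ∃ σ : ℝ, 0 < σ ∧
      ∀ (A : Matrix (Fin N) (Fin N) ℝ) (m : Fin N → ℝ), IsAdmissible κ A m →
        ∀ (j : Fin N) (u : Fin N → ℝ), (∀ i, 0 ≤ u i) → u j ≤ σ → fComp A m u j ≤ σ →
          ∃ i, fComp A m u i ≤ -σ := by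
  set B : ℝ := 1 + 1 / κ with hB
  have hB1 : 1 ≤ B := by
    have : 0 < 1 / κ := by positivity
    linarith
  set C : ℝ := (N.factorial : ℝ) * B ^ N with hC
  have hCpos : 0 < C := by positivity
  refine ⟨κ / (5 * C), by positivity, ?_⟩
  set σ : ℝ := κ / (5 * C) with hσ
  have hσpos : 0 < σ := by positivity
  have hσC : 5 * (σ * C) = κ := by
    rw [hσ]
    field_simp
  rintro A m ⟨hA, -, -, hM⟩ j u hu huj hfj
  by_contra! hneg
  let t : Fin N → ℝ := fun i => u i + (fComp A m u i + σ)
  have ht : ∀ i, 0 < t i := fun i => by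
    have := hneg i
    have := hu i
    simp only [t]
    linarith
  let p : Fin N → ℝ := fun i => u i / t i
  have hp : ∀ i, 0 ≤ p i ∧ p i ≤ 1 := fun i => by
    refine ⟨div_nonneg (hu i) (ht i).le, (div_le_one (ht i)).mpr ?_⟩
    have := hneg i
    simp only [t]
    linarith
  have hpt : ∀ i, p i * t i = u i := fun i => div_mul_cancel₀ _ (ht i).ne'
  have hPt : (mixed A p).mulVec t = m + σ • (fun _ => (1 : ℝ)) := by
    ext k
    have hterm : ∀ i, mixed A p k i * t i =
        (1 : Matrix (Fin N) (Fin N) ℝ) k i * (t i - u i) + A k i * u i := fun i => by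
      simp only [mixed, Matrix.of_apply]
      rw [← hpt i]
      ring
    simp only [Matrix.mulVec, dotProduct, hterm, Finset.sum_add_distrib]
    simp only [Matrix.one_apply, ite_mul, one_mul, zero_mul, Finset.sum_ite_eq,
      Finset.mem_univ, if_true, t, fComp, Pi.add_apply, Pi.smul_apply, smul_eq_mul]
    ring
  have hcramer : t j * (mixed A p).det = ((mixed A p).updateCol j m).det +
      σ * ((mixed A p).updateCol j (fun _ => (1 : ℝ))).det := by
    rw [← Matrix.det_updateCol_smul, ← Matrix.det_updateCol_add, ← hPt, ← Matrix.cramer_apply,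
      Matrix.cramer_eq_adjugate_mulVec, Matrix.mulVec_mulVec, Matrix.adjugate_mul,
      Matrix.smul_mulVec, Matrix.one_mulVec, Pi.smul_apply, smul_eq_mul, mul_comm]
  have hlow : κ ≤ ((mixed A p).updateCol j m).det :=
    le_det_mixed hM j Finset.univ p hp fun i hi => absurd (Finset.mem_univ i) hi
  have hdet : (mixed A p).det ≤ C :=
    (le_abs_self _).trans (abs_det_le (abs_mixed_le hκ hA hp))
  have hdet1 : -C ≤ ((mixed A p).updateCol j (fun _ => (1 : ℝ))).det := by
    refine (abs_le.mp (abs_det_le (B := B) fun i k => ?_)).1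
    by_cases hk : k = j
    · simpa [Matrix.updateCol_apply, hk] using hB1
    · simpa only [Matrix.updateCol_apply, hk, if_false] using abs_mixed_le hκ hA hp i k
  have htj : t j ≤ 3 * σ := by
    simp only [t]
    linarith
  have e1 := mul_le_mul_of_nonneg_left hdet (ht j).le
  have e2 := mul_le_mul_of_nonneg_right htj hCpos.le
  have e3 := mul_le_mul_of_nonneg_left hdet1 hσpos.le
  have e4 := mul_pos hσpos hCpos
  linarith
end

section
/- For every C > 0 there exists R > 0, depending only on C, N, p and κ, such that for every admissible pair (A, m) with constant κ and every u ∈ ℝ^N with u ≥ 0 and |u| ≥ R, one has g(u) ≠ 0 and Σ_{i=1}^N u_i |f_i(u)|^p ≥ C g(u). In other words, v(u) → ∞ as |u| → ∞ over nonnegative u, uniformly with respect to admissible coefficients. -/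
/-!
Suppose `∑ i, u i * |f i| ^ p ≤ C * ∑ i, |f i| ^ p` and let `U = max u`. It suffices to bound `U` in
terms of `C`, `N`, `p`, `κ` (`max_le_of_weighted_sum_le`); the claim is the contrapositive, and it
includes `g ≠ 0` because the inequality holds trivially when `g = 0`.

Every `|f i|` is at most `S = M + N M U` with `M = 1 / κ`. Split the indices by a threshold `K` into
the large ones, `J = {i | K ≤ u i}`, and the rest. Since the weight `u i - C` is at least `K - C` on
`J` and at least `-C` elsewhere, `(K - C) |f i| ^ p ≤ C N S ^ p` for `i ∈ J`, hence `|f i| ≤ δ S` as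
soon as `K - C = C N / δ ^ p`. On `J` the vector `u` solves the linear system with matrix `A_JJ` and
right-hand side `m - f - A_{J,Jᶜ} u`, whose size is at most `M + δ S + N M K`. The principal minor
`Δ_J ≥ κ` makes `A_JJ` invertible with uniformly bounded inverse (`abs_le_of_principal_system`), so
`U ≤ L (M + δ (M + N M U) + N M K)`. Choosing `δ` with `2 L N M δ = 1` absorbs the `U` on the right.
-/

open MeasureTheory Filter

/-- Cramer's rule with a determinant bounded below and entries bounded above: the inverse of any
principal submatrix is bounded uniformly in the index set and in the coefficients. -/
lemma abs_le_of_principal_system {N : ℕ} {κ M b : ℝ} (hκ : 0 < κ) (hM : 0 ≤ M)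
    (A : Matrix (Fin N) (Fin N) ℝ) (hA : ∀ i j, |A i j| ≤ M) (I : Finset (Fin N))
    (hI : κ ≤ minorP A I) (x : Fin N → ℝ)
    (hx : ∀ i ∈ I, |∑ j ∈ I, A i j * x j| ≤ b) :
    ∀ i ∈ I, |x i| ≤ N * (N.factorial * (M + 1) ^ N) / κ * b := by
  intro i hi
  set B : Matrix {x : Fin N // x ∈ I} {x : Fin N // x ∈ I} ℝ := Matrix.of fun i j => A i.1 j.1
    with hB
  have hdet : κ ≤ B.det := hI
  have hcard : Fintype.card {x : Fin N // x ∈ I} ≤ N := by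
    simpa using Finset.card_le_univ I
  have hb : 0 ≤ b := (abs_nonneg _).trans (hx i hi)
  have hadj : ∀ k l, |B.adjugate k l| ≤ N.factorial * (M + 1) ^ N := by
    intro k l
    rw [Matrix.adjugate_apply]
    have h := Matrix.det_le (A := B.updateRow l (Pi.single k 1)) (abv := AbsoluteValue.abs)
      (x := M + 1) (by
        intro r s
        simp only [AbsoluteValue.abs_apply, Matrix.updateRow_apply]
        split_ifs with h
        · by_cases hs : s = k
          · subst hs; simp [hM]
          · simp [hs]; linarith
        · have := hA r.1 s.1
          simp only [hB, Matrix.of_apply]; linarith)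
    simp only [AbsoluteValue.abs_apply, nsmul_eq_mul] at h
    refine h.trans ?_
    gcongr
    linarith
  have hsol : B.det * x i = ∑ k, B.adjugate ⟨i, hi⟩ k * ∑ j ∈ I, A k.1 j * x j := by
    have h1 : (B.adjugate * B).mulVec (fun k => x k.1) ⟨i, hi⟩ = B.det * x i := by
      rw [Matrix.adjugate_mul, Matrix.smul_mulVec, Matrix.one_mulVec]; rfl
    rw [← h1, ← Matrix.mulVec_mulVec]
    refine Finset.sum_congr rfl fun k _ => ?_
    congr 1
    rw [← Finset.sum_coe_sort I]
    rfl
  have hle : |B.det * x i| ≤ N * (N.factorial * (M + 1) ^ N) * b := by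
    rw [hsol]
    refine (Finset.abs_sum_le_sum_abs _ _).trans ?_
    calc ∑ k, |B.adjugate ⟨i, hi⟩ k * ∑ j ∈ I, A k.1 j * x j|
        ≤ ∑ _k : {x : Fin N // x ∈ I}, (N.factorial * (M + 1) ^ N) * b := by
          refine Finset.sum_le_sum fun k _ => ?_
          rw [abs_mul]
          exact mul_le_mul (hadj _ _) (hx k.1 k.2) (abs_nonneg _) (by positivity)
      _ = Fintype.card {x : Fin N // x ∈ I} * ((N.factorial * (M + 1) ^ N) * b) := by
          rw [Finset.sum_const, nsmul_eq_mul, Finset.card_univ]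
      _ ≤ N * ((N.factorial * (M + 1) ^ N) * b) := by gcongr
      _ = _ := by ring
  rw [abs_mul, abs_of_pos (hκ.trans_le hdet)] at hle
  rw [div_mul_eq_mul_div, le_div_iff₀ hκ]
  nlinarith [mul_le_mul_of_nonneg_right hdet (abs_nonneg (x i))]

lemma IsAdmissible.abs_m_le {N : ℕ} {κ : ℝ} (hκ : 0 < κ) {A : Matrix (Fin N) (Fin N) ℝ}
    {m : Fin N → ℝ} (h : IsAdmissible κ A m) (i : Fin N) : |m i| ≤ 1 / κ := by
  -- The bordered determinant for the empty index set is `m i` itself, so `m i ≥ κ > 0`.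
  have h1 := h.2.2.2 ∅ i (by simp)
  have h2 : minorM A m ∅ i = m i := by
    unfold minorM
    rw [Matrix.det_unique]
    rfl
  rw [h2] at h1
  rw [abs_of_pos (hκ.trans_le h1)]
  exact h.2.1 i

/-- The threshold `K = C + C N / δ ^ p` forces `|f i| ≤ δ S` at every index with `K ≤ u i`. -/
lemma abs_le_of_large_weight {N : ℕ} {p C δ S : ℝ} (hN : 0 < N) (hp : 0 < p) (hC : 0 < C)
    (hδ : 0 < δ) (hS : 0 ≤ S) (u f : Fin N → ℝ) (hu : ∀ i, 0 ≤ u i) (hf : ∀ i, |f i| ≤ S)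
    (hle : ∑ i, u i * |f i| ^ p ≤ C * ∑ i, |f i| ^ p) (i : Fin N)
    (hi : C + C * N / δ ^ p ≤ u i) : |f i| ≤ δ * S := by
  have hδp : 0 < δ ^ p := Real.rpow_pos_of_pos hδ p
  have hNp : (0 : ℝ) < N := by exact_mod_cast hN
  have hfp : ∀ j, 0 ≤ |f j| ^ p := fun j => Real.rpow_nonneg (abs_nonneg _) p
  have hother : ∑ j ∈ Finset.univ.erase i, |f j| ^ p ≤ N * S ^ p := by
    calc _ ≤ ∑ j, |f j| ^ p :=
          Finset.sum_le_sum_of_subset_of_nonneg (Finset.erase_subset _ _) fun j _ _ => hfp j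
      _ ≤ ∑ _j : Fin N, S ^ p :=
          Finset.sum_le_sum fun j _ => Real.rpow_le_rpow (abs_nonneg _) (hf j) hp.le
      _ = _ := by simp
  have hpos : 0 ≤ ∑ j ∈ Finset.univ.erase i, u j * |f j| ^ p :=
    Finset.sum_nonneg fun j _ => mul_nonneg (hu j) (hfp j)
  rw [← Finset.add_sum_erase _ _ (Finset.mem_univ i),
    ← Finset.add_sum_erase _ (fun j => |f j| ^ p) (Finset.mem_univ i)] at hle
  have h1 : C * N / δ ^ p * |f i| ^ p ≤ C * N * S ^ p := by
    nlinarith [mul_le_mul_of_nonneg_right hi (hfp i), mul_le_mul_of_nonneg_left hother hC.le]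
  have h2 : |f i| ^ p ≤ (δ * S) ^ p := by
    rw [Real.mul_rpow hδ.le hS]
    rw [div_mul_eq_mul_div, div_le_iff₀ hδp] at h1
    have hCN : 0 < C * N := by positivity
    refine le_of_mul_le_mul_left ?_ hCN
    linarith
  exact (Real.rpow_le_rpow_iff (abs_nonneg _) (by positivity) hp).1 h2

lemma abs_sum_mul_le {N : ℕ} {M U : ℝ} (hM : 0 ≤ M) (hU : 0 ≤ U) (a u : Fin N → ℝ)
    (s : Finset (Fin N)) (ha : ∀ j, |a j| ≤ M) (hu : ∀ j ∈ s, |u j| ≤ U) :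
    |∑ j ∈ s, a j * u j| ≤ N * M * U := by
  calc |∑ j ∈ s, a j * u j| ≤ ∑ j ∈ s, |a j * u j| := Finset.abs_sum_le_sum_abs _ _
    _ ≤ ∑ _j ∈ s, M * U := Finset.sum_le_sum fun j hj => by
        rw [abs_mul]; exact mul_le_mul (ha j) (hu j hj) (abs_nonneg _) hM
    _ = s.card * (M * U) := by simp
    _ ≤ N * (M * U) := by
        have : s.card ≤ N := by simpa using Finset.card_le_univ s
        gcongr
    _ = _ := by ring

/-- If the weighted mean of `u` does not exceed `C`, then all coordinates of `u` are bounded,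
uniformly in the admissible coefficients. -/
lemma max_le_of_weighted_sum_le {N : ℕ} (hN : 0 < N) (p κ C : ℝ) (hp : 1 ≤ p) (hκ : 0 < κ)
    (hC : 0 < C) :
    ∃ T : ℝ, 0 < T ∧ ∀ (A : Matrix (Fin N) (Fin N) ℝ) (m : Fin N → ℝ), IsAdmissible κ A m →
      ∀ u : Fin N → ℝ, (∀ i, 0 ≤ u i) →
        ∑ i, u i * |fComp A m u i| ^ p ≤ C * ∑ i, |fComp A m u i| ^ p → ∀ i, u i ≤ T := by
  have hNp : (1 : ℝ) ≤ N := by exact_mod_cast hN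
  have hp0 : 0 < p := by linarith
  set M : ℝ := 1 / κ with hMdef
  have hM : 0 < M := by positivity
  set L : ℝ := N * (N.factorial * (M + 1) ^ N) / κ with hLdef
  have hL : 0 < L := by positivity
  set δ : ℝ := 1 / (2 * L * N * M) with hδdef
  have hδ : 0 < δ := by positivity
  have hδL : 2 * (L * δ * N * M) = 1 := by rw [hδdef]; field_simp
  set K : ℝ := C + C * N / δ ^ p with hKdef
  have hK : 0 < K := by positivity
  refine ⟨K + 2 * L * (M + N * M * K) + 1, by positivity, ?_⟩
  intro A m hadm u hu hle
  have : Nonempty (Fin N) := ⟨⟨0, hN⟩⟩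
  obtain ⟨i₀, hi₀⟩ := Finite.exists_max u
  suffices h : u i₀ ≤ K + 2 * L * (M + N * M * K) + 1 from fun i => (hi₀ i).trans h
  have hLK : 0 ≤ 2 * L * (M + N * M * K) := by positivity
  by_cases hsmall : u i₀ < K
  · linarith
  push Not at hsmall
  set U := u i₀ with hU
  have hU0 : 0 ≤ U := hu i₀
  have hf : ∀ i, |fComp A m u i| ≤ M + N * M * U := by
    intro i
    have h1 := abs_sum_mul_le hM.le hU0 (A i) u Finset.univ (hadm.1 i)
      (fun j _ => by rw [abs_of_nonneg (hu j)]; exact hi₀ j)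
    exact (abs_sub _ _).trans (add_le_add (hadm.abs_m_le hκ i) h1)
  set J : Finset (Fin N) := Finset.univ.filter fun i => K ≤ u i with hJ
  have hsys : ∀ i ∈ J, |∑ j ∈ J, A i j * u j| ≤ M + δ * (M + N * M * U) + N * M * K := by
    intro i hi
    have h1 := abs_le_of_large_weight hN hp0 hC hδ (by positivity) u (fComp A m u) hu hf hle i
      (by simpa [hJ] using hi)
    have h2 := abs_sum_mul_le hM.le hK.le (A i) u Jᶜ (hadm.1 i) (fun j hj => by
      rw [abs_of_nonneg (hu j)]
      simp [hJ] at hj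
      exact hj.le)
    have h3 := hadm.abs_m_le hκ i
    have h4 : ∑ j ∈ J, A i j * u j = m i - fComp A m u i - ∑ j ∈ Jᶜ, A i j * u j := by
      have := Finset.sum_add_sum_compl J (fun j => A i j * u j)
      unfold fComp
      linarith
    rw [h4]
    rw [abs_le] at h1 h2 h3 ⊢
    constructor <;> linarith [h1.1, h1.2, h2.1, h2.2, h3.1, h3.2]
  have hfin := abs_le_of_principal_system hκ hM.le A hadm.1 J (hadm.2.2.1 J) u hsys i₀
    (by simpa [hJ] using hsmall)
  rw [← hLdef, ← hU, abs_of_nonneg hU0] at hfin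
  -- `2 L N M δ = 1` turns the `U` term into `U / 2`, and `L δ M ≤ 1 / 2` since `1 ≤ N`.
  have h5 : L * δ * M ≤ L * δ * N * M := by
    have : 0 ≤ L * δ * M := by positivity
    nlinarith
  have h6 : L * δ * N * M * U = U / 2 := by
    have : L * δ * N * M = 1 / 2 := by linarith
    rw [this]; ring
  nlinarith

/-- `v(u) → ∞` as `|u| → ∞` over nonnegative `u`, uniformly in the admissible coefficients:
for every `C > 0` there is `R > 0` depending only on `C`, `N`, `p`, `κ` such that for every
admissible pair and every nonnegative `u` with `|u| ≥ R` one has `g(u) ≠ 0` and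
`Σ_i u_i |f_i(u)|^p ≥ C g(u)`. -/
theorem v_tendsto_infty_uniform {N : ℕ} (hN : 0 < N) (p κ : ℝ) (hp : 1 ≤ p) (hκ : 0 < κ) :
    ∀ C : ℝ, 0 < C → ∃ R : ℝ, 0 < R ∧
      ∀ (A : Matrix (Fin N) (Fin N) ℝ) (m : Fin N → ℝ), IsAdmissible κ A m →
        ∀ u : Fin N → ℝ, (∀ i, 0 ≤ u i) → R ≤ Real.sqrt (∑ i, u i ^ 2) →
          (∑ i, |fComp A m u i| ^ p) ≠ 0 ∧
          C * ∑ i, |fComp A m u i| ^ p ≤ ∑ i, u i * |fComp A m u i| ^ p := by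
  intro C hC
  obtain ⟨T, hT, hbound⟩ := max_le_of_weighted_sum_le hN p κ C hp hκ hC
  refine ⟨N * T + 1, by positivity, ?_⟩
  intro A m hadm u hu hR
  have hNp : (1 : ℝ) ≤ N := by exact_mod_cast hN
  have hlt : C * ∑ i, |fComp A m u i| ^ p < ∑ i, u i * |fComp A m u i| ^ p := by
    by_contra hcon
    have hT' := hbound A m hadm u hu (not_lt.1 hcon)
    have h1 : ∑ i, u i ^ 2 ≤ (N * T) ^ 2 := by
      calc ∑ i, u i ^ 2 ≤ ∑ _i : Fin N, T ^ 2 :=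
            Finset.sum_le_sum fun i _ => pow_le_pow_left₀ (hu i) (hT' i) 2
        _ = N * T ^ 2 := by simp
        _ ≤ (N * T) ^ 2 := by
            have h := mul_nonneg (sub_nonneg.2 hNp)
              (mul_nonneg (zero_le_one.trans hNp) (sq_nonneg T))
            nlinarith
    have h2 := Real.sqrt_le_sqrt h1
    rw [Real.sqrt_sq (by positivity)] at h2
    linarith
  refine ⟨fun h0 => ?_, hlt.le⟩
  have hz : ∀ i, |fComp A m u i| ^ p = 0 := fun i =>
    (Finset.sum_eq_zero_iff_of_nonneg fun j _ => Real.rpow_nonneg (abs_nonneg _) p).1 h0 i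
      (Finset.mem_univ i)
  simp [hz] at hlt
end

section
/- There exists σ > 0, depending only on N, p and κ, such that for every ε > 0 there exists δ > 0, depending only on ε, N, p and κ, with the following property: for every admissible pair (A, m) with constant κ and every u ∈ ℝ^N with u ≥ 0, g(u) ≠ 0 and v(u) < δ, there exists a nonempty index set I ⊆ {1,…,N} such that Σ_{i ∈ I} u_i + Σ_{j ∉ I} |f_j(u)| < ε and f_i(u) > σ for every i ∈ I. -/
/-!
The argument is quantitative. Given small thresholds `η` and `θ`, let `S = {i | η ≤ u i}` and take
`I = Sᶜ`. Smallness of `v(u)` forces `|f_i| ≤ θ ∑ |f_k|` for `i ∈ S` (`abs_f_le`), and forces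
`S ≠ univ`, since otherwise `v(u) ≥ η`.

Put `r_i = m_i - ∑_{k ∈ S} a_{ik} u_k` (`resid`). It differs from `f_i` by `O(η)` because `u ≤ η`
off `S` (`resid_sub_le`). Cramer's rule for the principal block over `S`, together with `Δ_S ≥ κ`,
bounds `u` on `S` by `C (1 + θ ∑ |f_k|)`; as `∑ |f_k|` is at most linear in `u`, this yields an
a priori bound on `∑ |f_k|` for small `θ` (`sum_abs_f_le`), so `f = O(θ)` on `S`.

Cramer's rule for the bordered matrix, applied to the vector `(-u_S, 1)`, gives
`κ ≤ Δ_{S,j} ≤ C ∑_{k ∈ S} |r_k| + Δ_S r_j` (`minorM_le`). The sum is `O(θ + η)` and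
`κ ≤ Δ_S ≤ C`, so `r_j`, and hence `f_j`, is bounded below by a fixed multiple of `κ / C` for
`j ∉ S`. Here `C = (N + 1)! B ^ (N + 1)` with `B = 1 + 1 / κ` bounds all determinants and cofactors
involved.
-/

open MeasureTheory Filter

/-! ### Cofactor bounds and Cramer's rule -/

/-- All cofactors of a matrix of size at most `N + 1` with entries bounded by `B ≥ 1` are bounded
by `(N + 1)! * B ^ (N + 1)`. -/
lemma abs_adjugate_le {n : Type*} [Fintype n] [DecidableEq n] {N : ℕ} (M : Matrix n n ℝ) {B : ℝ}
    (hB : 1 ≤ B) (hM : ∀ i j, |M i j| ≤ B) (hn : Fintype.card n ≤ N + 1) (i j : n) :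
    |M.adjugate i j| ≤ (N + 1).factorial * B ^ (N + 1) := by
  rw [Matrix.adjugate_apply]
  have h := Matrix.det_le (A := M.updateRow j (Pi.single i 1)) (abv := AbsoluteValue.abs) (x := B)
    (fun a b => by
      by_cases ha : a = j
      · subst ha
        by_cases hb : b = i
        · subst hb; simpa using hB
        · simp [hb]; linarith
      · simpa [Matrix.updateRow_ne ha] using hM a b)
  refine le_trans h ?_
  rw [nsmul_eq_mul]
  have h1 : ((Fintype.card n).factorial : ℝ) ≤ (N + 1).factorial := by
    exact_mod_cast Nat.factorial_le hn
  have h2 : B ^ Fintype.card n ≤ B ^ (N + 1) := pow_le_pow_right₀ hB hn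
  gcongr

/-- Cramer's rule as an estimate: `det M * w i` is bounded through the entries of `M w`. -/
lemma abs_det_mul_le {n : Type*} [Fintype n] [DecidableEq n] {N : ℕ} (M : Matrix n n ℝ) {B : ℝ}
    (hB : 1 ≤ B) (hM : ∀ i j, |M i j| ≤ B) (hn : Fintype.card n ≤ N + 1) (w : n → ℝ) (i : n) :
    |M.det * w i| ≤ (N + 1).factorial * B ^ (N + 1) * ∑ k, |(M.mulVec w) k| := by
  have h : M.det * w i = ∑ k, M.adjugate i k * (M.mulVec w) k := by
    have h1 : M.adjugate.mulVec (M.mulVec w) = M.det • w := by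
      rw [Matrix.mulVec_mulVec, Matrix.adjugate_mul, Matrix.smul_mulVec, Matrix.one_mulVec]
    have h2 := congrFun h1 i
    simpa [Matrix.mulVec, dotProduct] using h2.symm
  rw [h, Finset.mul_sum]
  refine (Finset.abs_sum_le_sum_abs _ _).trans (Finset.sum_le_sum fun k _ => ?_)
  rw [abs_mul]
  exact mul_le_mul_of_nonneg_right (abs_adjugate_le M hB hM hn i k) (abs_nonneg _)

/-- The cofactor of the corner entry of the bordered matrix is the principal minor. -/
lemma adjugate_bordered {n : Type*} [Fintype n] [DecidableEq n]
    (M : Matrix (Option n) (Option n) ℝ) :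
    M.adjugate none none = (Matrix.of fun i j : n => M (some i) (some j)).det := by
  rw [Matrix.adjugate_apply, ← Matrix.det_submatrix_equiv_self (Equiv.optionEquivSumPUnit.{0} n).symm]
  have : (M.updateRow none (Pi.single none 1)).submatrix (Equiv.optionEquivSumPUnit.{0} n).symm
      (Equiv.optionEquivSumPUnit.{0} n).symm =
      Matrix.fromBlocks (Matrix.of fun i j : n => M (some i) (some j))
        (Matrix.of fun i (_ : PUnit.{1}) => M (some i) none) 0 1 := by
    ext a b
    rcases a with a | a <;> rcases b with b | b <;>
      simp [Matrix.updateRow_apply]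
  rw [this, Matrix.det_fromBlocks_zero₂₁]
  simp

/-! ### Residuals and the minors of an admissible pair -/

/-- The residual of row `i` when only the coordinates of `u` in `S` are kept. -/
noncomputable def resid {N : ℕ} (A : Matrix (Fin N) (Fin N) ℝ) (m u : Fin N → ℝ)
    (S : Finset (Fin N)) (i : Fin N) : ℝ :=
  m i - ∑ k ∈ S, A i k * u k

lemma minorP_mul_le {N : ℕ} {A : Matrix (Fin N) (Fin N) ℝ} (m u : Fin N → ℝ)
    (S : Finset (Fin N)) {B : ℝ} (hB : 1 ≤ B) (hA : ∀ i j, |A i j| ≤ B) {k : Fin N} (hk : k ∈ S) :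
    |minorP A S * u k| ≤
      (N + 1).factorial * B ^ (N + 1) * ∑ i ∈ S, |m i - resid A m u S i| := by
  have hn : Fintype.card {x : Fin N // x ∈ S} ≤ N + 1 := by
    have := Finset.card_le_univ S
    simp at this ⊢; omega
  have h := abs_det_mul_le (Matrix.of fun i j : {x : Fin N // x ∈ S} => A i.1 j.1) hB
    (fun i j => hA i.1 j.1) hn (fun i => u i.1) ⟨k, hk⟩
  refine h.trans (le_of_eq ?_)
  rw [← Finset.sum_coe_sort S]
  congr 1
  refine Finset.sum_congr rfl fun i _ => ?_
  simp [resid, Matrix.mulVec, dotProduct, ← Finset.sum_coe_sort S]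

/-- Applying the bordered matrix to `(-u_S, 1)` gives the residuals, so Cramer's rule expresses
`Δ_{S,j}` through them; the coefficient of `resid j` is `Δ_S`. -/
lemma minorM_le {N : ℕ} {A : Matrix (Fin N) (Fin N) ℝ} {m : Fin N → ℝ} (u : Fin N → ℝ)
    (S : Finset (Fin N)) {B : ℝ} (hB : 1 ≤ B) (hA : ∀ i j, |A i j| ≤ B) (hm : ∀ i, |m i| ≤ B)
    (j : Fin N) :
    minorM A m S j ≤ (N + 1).factorial * B ^ (N + 1) * (∑ i ∈ S, |resid A m u S i|) +
      minorP A S * resid A m u S j := by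
  have hn : Fintype.card (Option {x : Fin N // x ∈ S}) ≤ N + 1 := by
    have := Finset.card_le_univ S
    simp at this ⊢; omega
  obtain ⟨M, hM⟩ : ∃ M : Matrix (Option {x : Fin N // x ∈ S}) (Option {x : Fin N // x ∈ S}) ℝ,
      M = Matrix.of fun k l : Option {x : Fin N // x ∈ S} =>
        match k, l with
        | some k', some l' => A k'.1 l'.1
        | some k', none => m k'.1
        | none, some l' => A j l'.1
        | none, none => m j := ⟨_, rfl⟩
  have hdet : minorM A m S j = M.det := by rw [hM]; rfl
  have hMB : ∀ a b, |M a b| ≤ B := by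
    intro a b
    rcases a with _ | a <;> rcases b with _ | b <;> simp [hM, hA, hm]
  let w : Option {x : Fin N // x ∈ S} → ℝ := fun a => a.elim 1 (fun k => - u k.1)
  have hw1 : (M.mulVec w) none = resid A m u S j := by
    simp [hM, w, resid, Matrix.mulVec, dotProduct, ← Finset.sum_coe_sort S, sub_eq_add_neg]
  have hw2 : ∀ k : {x : Fin N // x ∈ S}, (M.mulVec w) (some k) = resid A m u S k.1 := by
    intro k
    simp [hM, w, resid, Matrix.mulVec, dotProduct, ← Finset.sum_coe_sort S, sub_eq_add_neg]
  have hcr : M.det = M.adjugate none none * resid A m u S j +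
      ∑ k : {x : Fin N // x ∈ S}, M.adjugate none (some k) * resid A m u S k.1 := by
    have h1 : M.adjugate.mulVec (M.mulVec w) = M.det • w := by
      rw [Matrix.mulVec_mulVec, Matrix.adjugate_mul, Matrix.smul_mulVec, Matrix.one_mulVec]
    have h2 := congrFun h1 none
    rw [Matrix.mulVec, dotProduct, Fintype.sum_option] at h2
    simp only [hw1, hw2] at h2
    rw [h2]
    simp [w]
  have hP : M.adjugate none none = minorP A S := by
    rw [adjugate_bordered, minorP, hM]
    rfl
  rw [hdet, hcr, hP, add_comm, Finset.mul_sum, ← Finset.sum_coe_sort S]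
  refine add_le_add (Finset.sum_le_sum fun k _ => ?_) le_rfl
  refine (le_abs_self _).trans ?_
  rw [abs_mul]
  exact mul_le_mul_of_nonneg_right (abs_adjugate_le M hB hMB hn _ _) (abs_nonneg _)

lemma abs_minorP_le {N : ℕ} {A : Matrix (Fin N) (Fin N) ℝ}
    (S : Finset (Fin N)) {B : ℝ} (hB : 1 ≤ B) (hA : ∀ i j, |A i j| ≤ B) :
    |minorP A S| ≤ (N + 1).factorial * B ^ (N + 1) := by
  have hn : Fintype.card {x : Fin N // x ∈ S} ≤ N + 1 := by
    have := Finset.card_le_univ S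
    simp at this ⊢; omega
  have h := Matrix.det_le (A := Matrix.of fun i j : {x : Fin N // x ∈ S} => A i.1 j.1)
    (abv := AbsoluteValue.abs) (x := B) (fun i j => hA i.1 j.1)
  refine le_trans h ?_
  rw [nsmul_eq_mul]
  have h1 : ((Fintype.card {x : Fin N // x ∈ S}).factorial : ℝ) ≤ (N + 1).factorial := by
    exact_mod_cast Nat.factorial_le hn
  have h2 : B ^ Fintype.card {x : Fin N // x ∈ S} ≤ B ^ (N + 1) := pow_le_pow_right₀ hB hn
  gcongr

lemma resid_sub_le {N : ℕ} {A : Matrix (Fin N) (Fin N) ℝ} {m u : Fin N → ℝ}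
    {S : Finset (Fin N)} {B η : ℝ} (hB : 1 ≤ B) (hη : 0 ≤ η) (hA : ∀ i j, |A i j| ≤ B)
    (hu : ∀ i ∉ S, |u i| ≤ η) (i : Fin N) :
    |resid A m u S i - fComp A m u i| ≤ N * B * η := by
  have h : resid A m u S i - fComp A m u i = ∑ k ∈ Sᶜ, A i k * u k := by
    rw [resid, fComp, ← Finset.sum_add_sum_compl S]
    ring
  rw [h]
  refine (Finset.abs_sum_le_sum_abs _ _).trans ?_
  have h1 : ∑ k ∈ Sᶜ, |A i k * u k| ≤ (Sᶜ).card • (B * η) := by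
    refine Finset.sum_le_card_nsmul _ _ _ fun k hk => ?_
    rw [abs_mul]
    exact mul_le_mul (hA i k) (hu k (Finset.mem_compl.1 hk)) (abs_nonneg _) (by linarith)
  refine h1.trans ?_
  rw [nsmul_eq_mul, mul_assoc]
  have h2 : ((Sᶜ).card : ℝ) ≤ N := by
    have := Finset.card_le_univ (Sᶜ)
    simp only [Fintype.card_fin] at this
    exact_mod_cast this
  gcongr

/-! ### Smallness of `f` where `u` is not small, and the a priori bound -/

lemma eventually_mul_le (a : ℝ) {x : ℝ} (hx : 0 < x) : ∀ᶠ t : ℝ in nhdsWithin 0 (Set.Ioi 0),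
    t * a ≤ x := by
  have h : Tendsto (fun t : ℝ => t * a) (nhdsWithin 0 (Set.Ioi 0)) (nhds 0) := by
    have : Continuous fun t : ℝ => t * a := by fun_prop
    simpa using (this.tendsto 0).mono_left nhdsWithin_le_nhds
  exact h.eventually (Iic_mem_nhds hx)

/-- If `v(u)` is small, then `f` is small (relative to `T = ∑ |f_i|`) where `u` is not. -/
lemma abs_f_le {N : ℕ} (hN : 0 < N) {p η θ δ : ℝ} (hp : 1 ≤ p) (hη : 0 < η) (hθ : 0 < θ)
    {u f : Fin N → ℝ} (hu : ∀ i, 0 ≤ u i) (hδ : δ ≤ η * θ ^ p / N)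
    (hg : 0 < ∑ i, |f i| ^ p)
    (hv : ∑ i, u i * |f i| ^ p < δ * ∑ i, |f i| ^ p) {i : Fin N} (hi : η ≤ u i) :
    |f i| ≤ θ * ∑ k, |f k| := by
  have hNr : (0 : ℝ) < N := by exact_mod_cast hN
  set T := ∑ k, |f k| with hT
  have hT0 : 0 ≤ T := Finset.sum_nonneg fun _ _ => abs_nonneg _
  have hfT : ∀ k, |f k| ≤ T := fun k =>
    Finset.single_le_sum (f := fun k => |f k|) (fun _ _ => abs_nonneg _) (Finset.mem_univ k)
  have hgT : ∑ k, |f k| ^ p ≤ N * T ^ p := by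
    have := Finset.sum_le_card_nsmul (Finset.univ : Finset (Fin N)) (fun k => |f k| ^ p) (T ^ p)
      (fun k _ => Real.rpow_le_rpow (abs_nonneg _) (hfT k) (by linarith))
    simpa using this
  have h1 : u i * |f i| ^ p ≤ ∑ k, u k * |f k| ^ p :=
    Finset.single_le_sum (f := fun k => u k * |f k| ^ p)
      (fun k _ => mul_nonneg (hu k) (Real.rpow_nonneg (abs_nonneg _) _)) (Finset.mem_univ i)
  have h2 : η * |f i| ^ p ≤ u i * |f i| ^ p :=
    mul_le_mul_of_nonneg_right hi (Real.rpow_nonneg (abs_nonneg _) _)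
  have h3 : δ * ∑ k, |f k| ^ p ≤ η * θ ^ p / N * (N * T ^ p) := by
    refine (mul_le_mul_of_nonneg_right hδ hg.le).trans ?_
    exact mul_le_mul_of_nonneg_left hgT (by positivity)
  have h4 : η * θ ^ p / N * (N * T ^ p) = η * (θ * T) ^ p := by
    rw [Real.mul_rpow hθ.le hT0]
    field_simp
  have h5 : |f i| ^ p ≤ (θ * T) ^ p := by
    refine le_of_mul_le_mul_left ?_ hη
    linarith
  exact (Real.rpow_le_rpow_iff (abs_nonneg _) (by positivity) (by linarith)).1 h5

/-- A priori bound: if `u ≤ η ≤ 1` off `S` and `|f| ≤ θ ∑ |f_i|` on `S` with `θ` small, then `u`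
and `f` are bounded. -/
lemma sum_abs_f_le {N : ℕ} {κ B C θ η K : ℝ} (hκ : 0 < κ) (hB : 1 ≤ B)
    {A : Matrix (Fin N) (Fin N) ℝ} {m u : Fin N → ℝ} {S : Finset (Fin N)}
    (hC : C = (N + 1).factorial * B ^ (N + 1))
    (hK : K = N + N ^ 2 * C * B * (1 + N) / κ)
    (hA : ∀ i j, |A i j| ≤ B) (hm : ∀ i, |m i| ≤ B) (hP : κ ≤ minorP A S)
    (hu : ∀ i, 0 ≤ u i) (hη : 0 ≤ η) (hη1 : η ≤ 1) (huS : ∀ i ∉ S, |u i| ≤ η) (hθ : 0 ≤ θ)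
    (hθK : θ * (N ^ 3 * C * B / κ) ≤ 1 / 2)
    (hf : ∀ i ∈ S, |fComp A m u i| ≤ θ * ∑ k, |fComp A m u k|) :
    ∑ k, |fComp A m u k| ≤ N * B * (2 * K + 2) := by
  have hC0 : 0 < C := by rw [hC]; positivity
  set U := ∑ k, u k with hU
  set T := ∑ k, |fComp A m u k| with hT
  have hU0 : 0 ≤ U := Finset.sum_nonneg fun k _ => hu k
  have hNr : (0 : ℝ) ≤ N := Nat.cast_nonneg N
  have hTU : T ≤ N * (B * (1 + U)) := by
    have : ∀ k ∈ (Finset.univ : Finset (Fin N)), |fComp A m u k| ≤ B * (1 + U) := by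
      intro k _
      have h1 : |∑ j, A k j * u j| ≤ B * U := by
        rw [hU, Finset.mul_sum]
        refine (Finset.abs_sum_le_sum_abs _ _).trans (Finset.sum_le_sum fun j _ => ?_)
        rw [abs_mul, abs_of_nonneg (hu j)]
        exact mul_le_mul_of_nonneg_right (hA k j) (hu j)
      have h2 := abs_sub (m k) (∑ j, A k j * u j)
      have h3 := hm k
      rw [fComp]
      linarith
    simpa using Finset.sum_le_card_nsmul _ _ _ this
  have hcardS : (S.card : ℝ) ≤ N := by
    have := Finset.card_le_univ S
    simp only [Fintype.card_fin] at this
    exact_mod_cast this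
  have hT0 : 0 ≤ T := Finset.sum_nonneg fun _ _ => abs_nonneg _
  have hR : ∑ i ∈ S, |m i - resid A m u S i| ≤ N * (B + (θ * T + N * B * η)) := by
    have : ∀ i ∈ S, |m i - resid A m u S i| ≤ B + (θ * T + N * B * η) := by
      intro i hi
      have h1 := abs_le.1 (resid_sub_le (m := m) hB hη hA huS i)
      have h2 := abs_le.1 (hf i hi)
      have h3 := abs_le.1 (hm i)
      rw [abs_le]
      constructor <;> linarith
    refine (Finset.sum_le_card_nsmul _ _ _ this).trans ?_
    rw [nsmul_eq_mul]
    gcongr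
  have hR' : ∑ i ∈ S, |m i - resid A m u S i| ≤ N * (B + (θ * T + N * B)) := by
    refine hR.trans ?_
    have := mul_le_of_le_one_right (by positivity : 0 ≤ N * B) hη1
    exact mul_le_mul_of_nonneg_left (by linarith) hNr
  have huk : ∀ k, u k ≤ 1 + C / κ * (N * (B + (θ * T + N * B))) := by
    intro k
    by_cases hk : k ∈ S
    · have h1 := minorP_mul_le m u S hB hA hk
      rw [← hC] at h1
      have h2 : κ * u k ≤ C * (N * (B + (θ * T + N * B))) := by
        calc κ * u k ≤ minorP A S * u k := mul_le_mul_of_nonneg_right hP (hu k)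
          _ ≤ _ := le_abs_self _
          _ ≤ _ := h1
          _ ≤ _ := mul_le_mul_of_nonneg_left hR' hC0.le
      have h3 : u k ≤ C / κ * (N * (B + (θ * T + N * B))) := by
        rw [div_mul_eq_mul_div, le_div_iff₀ hκ]
        linarith
      linarith
    · have h1 := huS k hk
      rw [abs_of_nonneg (hu k)] at h1
      have : 0 ≤ C / κ * (N * (B + (θ * T + N * B))) := by positivity
      linarith
  have hUb : U ≤ N * (1 + C / κ * (N * (B + (θ * T + N * B)))) := by
    have := Finset.sum_le_card_nsmul (Finset.univ : Finset (Fin N)) u _ (fun k _ => huk k)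
    rwa [nsmul_eq_mul, Finset.card_univ, Fintype.card_fin] at this
  have hUb2 : U ≤ K + θ * (N ^ 3 * C * B / κ) * (1 + U) := by
    refine hUb.trans ?_
    have : N * (1 + C / κ * (N * (B + (θ * T + N * B)))) ≤
        N * (1 + C / κ * (N * (B + (θ * (N * (B * (1 + U))) + N * B)))) := by gcongr
    refine this.trans (le_of_eq ?_)
    rw [hK]
    field_simp
    ring
  have hUb3 : U ≤ 2 * K + 1 := by
    have := mul_le_mul_of_nonneg_right hθK (by linarith : 0 ≤ 1 + U)
    linarith
  refine hTU.trans ?_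
  rw [← mul_assoc]
  exact mul_le_mul_of_nonneg_left (by linarith) (by positivity)

/-! ### The index set -/

/-- There is `σ > 0` depending only on `N`, `p`, `κ` such that for every `ε > 0` there is
`δ > 0` depending only on `ε`, `N`, `p`, `κ` with: for every admissible pair and every
nonnegative `u` with `g(u) ≠ 0` and `v(u) < δ`, there is a nonempty index set `I` with
`Σ_{i ∈ I} u_i + Σ_{j ∉ I} |f_j(u)| < ε` and `f_i(u) > σ` for all `i ∈ I`. -/
theorem exists_index_set_small_u_and_large_f {N : ℕ} (hN : 0 < N) (p κ : ℝ)
    (hp : 1 ≤ p) (hκ : 0 < κ) :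
    ∃ σ : ℝ, 0 < σ ∧ ∀ ε : ℝ, 0 < ε → ∃ δ : ℝ, 0 < δ ∧
      ∀ (A : Matrix (Fin N) (Fin N) ℝ) (m : Fin N → ℝ), IsAdmissible κ A m →
        ∀ u : Fin N → ℝ, (∀ i, 0 ≤ u i) → (∑ i, |fComp A m u i| ^ p) ≠ 0 →
          (∑ i, u i * |fComp A m u i| ^ p) / (∑ i, |fComp A m u i| ^ p) < δ →
          ∃ I : Finset (Fin N), I.Nonempty ∧
            (∑ i ∈ I, u i) + (∑ j ∈ Iᶜ, |fComp A m u j|) < ε ∧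
            ∀ i ∈ I, σ < fComp A m u i := by
  obtain ⟨B, hBdef⟩ : ∃ B : ℝ, B = 1 + 1 / κ := ⟨_, rfl⟩
  have hκ' : 0 < 1 / κ := by positivity
  have hB : 1 ≤ B := by linarith
  obtain ⟨C, hC⟩ : ∃ C : ℝ, C = (N + 1).factorial * B ^ (N + 1) := ⟨_, rfl⟩
  have hC0 : 0 < C := by rw [hC]; positivity
  have hNr : (0 : ℝ) < N := by exact_mod_cast hN
  obtain ⟨K, hK⟩ : ∃ K : ℝ, K = N + N ^ 2 * C * B * (1 + N) / κ := ⟨_, rfl⟩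
  have hK0 : 0 < K := by rw [hK]; positivity
  obtain ⟨T₀, hT₀⟩ : ∃ T₀ : ℝ, T₀ = N * B * (2 * K + 2) := ⟨_, rfl⟩
  have hT₀0 : 0 < T₀ := by rw [hT₀]; positivity
  refine ⟨κ / (4 * C), by positivity, fun ε hε => ?_⟩
  obtain ⟨θ, hθ1, hθ2, hθ3, hθ⟩ :=
    ((eventually_mul_le (N ^ 3 * C * B / κ) one_half_pos).and
      ((eventually_mul_le (N * T₀) (by positivity : 0 < ε / 4)).and
        ((eventually_mul_le (C * N * T₀) (by positivity : 0 < κ / 8)).and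
          (self_mem_nhdsWithin (a := (0 : ℝ)) (s := Set.Ioi 0))))).exists
  obtain ⟨η, hη1, hη2, hη3, hη4, hη⟩ :=
    ((eventually_mul_le 1 one_pos).and
      ((eventually_mul_le N (by positivity : 0 < ε / 4)).and
        ((eventually_mul_le (C * N * (N * B)) (by positivity : 0 < κ / 8)).and
          ((eventually_mul_le (N * B) (by positivity : 0 < κ / (8 * C))).and
            (self_mem_nhdsWithin (a := (0 : ℝ)) (s := Set.Ioi 0)))))).exists
  replace hθ : 0 < θ := hθ
  replace hη : 0 < η := hη
  refine ⟨min η (η * θ ^ p / N), by positivity, ?_⟩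
  rintro A m ⟨hA', hm', hP, hM⟩ u hu hg0 hv
  have hA : ∀ i j, |A i j| ≤ B := fun i j => (hA' i j).trans (by linarith)
  have hm : ∀ i, |m i| ≤ B := by
    intro i
    -- the bordered determinant over the empty index set is `m i`
    have h0 : κ ≤ m i := by
      have := hM ∅ i (by simp)
      rwa [minorM, Matrix.det_unique] at this
    rw [abs_of_nonneg (hκ.le.trans h0)]
    exact (hm' i).trans (by linarith)
  have hg : 0 < ∑ i, |fComp A m u i| ^ p :=
    lt_of_le_of_ne (Finset.sum_nonneg fun i _ => Real.rpow_nonneg (abs_nonneg _) _) hg0.symm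
  rw [div_lt_iff₀ hg] at hv
  let S : Finset (Fin N) := Finset.univ.filter fun i => η ≤ u i
  have hS : ∀ i, i ∈ S ↔ η ≤ u i := by simp [S]
  have huS : ∀ i ∉ S, |u i| ≤ η := by
    intro i hi
    rw [hS, not_le] at hi
    rw [abs_of_nonneg (hu i)]
    exact hi.le
  have hfS : ∀ i ∈ S, |fComp A m u i| ≤ θ * ∑ k, |fComp A m u k| := fun i hi =>
    abs_f_le hN hp hη hθ hu (min_le_right _ _) hg hv ((hS i).1 hi)
  have hT : ∑ k, |fComp A m u k| ≤ T₀ := by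
    rw [hT₀]
    exact sum_abs_f_le hκ hB hC hK hA hm (hP S) hu hη.le (by linarith) huS hθ.le hθ1 hfS
  have hfS' : ∀ i ∈ S, |fComp A m u i| ≤ θ * T₀ := fun i hi =>
    (hfS i hi).trans (mul_le_mul_of_nonneg_left hT hθ.le)
  have hcard : ∀ I : Finset (Fin N), (I.card : ℝ) ≤ N := by
    intro I
    have := Finset.card_le_univ I
    simp only [Fintype.card_fin] at this
    exact_mod_cast this
  refine ⟨Sᶜ, ?_, ?_, ?_⟩
  · -- if `u ≥ η` everywhere, then `v(u) ≥ η`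
    by_contra hne
    rw [Finset.not_nonempty_iff_eq_empty] at hne
    have hall : ∀ i, η ≤ u i := by
      intro i
      rw [← hS]
      by_contra hi
      have := Finset.mem_compl.2 hi
      rw [hne] at this
      simp at this
    have h1 : η * ∑ i, |fComp A m u i| ^ p ≤ ∑ i, u i * |fComp A m u i| ^ p := by
      rw [Finset.mul_sum]
      exact Finset.sum_le_sum fun i _ =>
        mul_le_mul_of_nonneg_right (hall i) (Real.rpow_nonneg (abs_nonneg _) _)
    have h2 := mul_le_mul_of_nonneg_right (min_le_left η (η * θ ^ p / N)) hg.le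
    linarith
  · rw [compl_compl]
    have h1 : ∑ i ∈ Sᶜ, u i ≤ N * η := by
      refine (Finset.sum_le_card_nsmul _ _ η fun i hi =>
        (le_abs_self _).trans (huS i (Finset.mem_compl.1 hi))).trans ?_
      rw [nsmul_eq_mul]
      exact mul_le_mul_of_nonneg_right (hcard _) hη.le
    have h2 : ∑ i ∈ S, |fComp A m u i| ≤ N * (θ * T₀) := by
      refine (Finset.sum_le_card_nsmul _ _ _ hfS').trans ?_
      rw [nsmul_eq_mul]
      exact mul_le_mul_of_nonneg_right (hcard _) (by positivity)
    linarith
  · intro j hj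
    have hjS := Finset.mem_compl.1 hj
    have h1 := minorM_le u S hB hA hm j
    rw [← hC] at h1
    have h2 := hM S j hjS
    have h3 : ∑ i ∈ S, |resid A m u S i| ≤ N * (θ * T₀ + N * B * η) := by
      have : ∀ i ∈ S, |resid A m u S i| ≤ θ * T₀ + N * B * η := by
        intro i hi
        have h1 := abs_le.1 (resid_sub_le (m := m) hB hη.le hA huS i)
        have h2 := abs_le.1 (hfS' i hi)
        rw [abs_le]
        constructor <;> linarith
      refine (Finset.sum_le_card_nsmul _ _ _ this).trans ?_
      rw [nsmul_eq_mul]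
      exact mul_le_mul_of_nonneg_right (hcard _) (by positivity)
    have h4 : C * ∑ i ∈ S, |resid A m u S i| ≤ κ / 4 := by
      refine (mul_le_mul_of_nonneg_left h3 hC0.le).trans ?_
      linarith
    have h5 : κ * (3 / 4) ≤ minorP A S * resid A m u S j := by linarith
    have hPS := hP S
    have h6 : 0 < resid A m u S j :=
      pos_of_mul_pos_right (lt_of_lt_of_le (by positivity) h5) (hκ.le.trans hPS)
    have h7 : minorP A S ≤ C := by
      rw [hC]
      exact (le_abs_self _).trans (abs_minorP_le S hB hA)
    have h8 : κ * (3 / 4) ≤ C * resid A m u S j :=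
      h5.trans (mul_le_mul_of_nonneg_right h7 h6.le)
    have h9 : κ / C * (3 / 4) ≤ resid A m u S j := by
      rw [div_mul_eq_mul_div, div_le_iff₀ hC0]
      linarith
    have h10 := abs_le.1 (resid_sub_le (m := m) hB hη.le hA huS j)
    have h11 : κ / (4 * C) = κ / C * (1 / 4) := by field_simp
    have h12 : κ / (8 * C) = κ / C * (1 / 8) := by field_simp
    have h13 : 0 < κ / C := by positivity
    rw [h12] at hη4
    rw [h11]
    linarith
end

section
/- For every ε > 0 there exists δ > 0, depending only on ε, N, p and κ, such that for every admissible pair (A, m) with constant κ and every u ∈ ℝ^N with u ≥ 0, g(u) ≠ 0 and v(u) < δ, one has min over nonempty I ⊆ {1,…,N} of (Σ_{i ∈ I} u_i + Σ_{j ∉ I} |f_j(u)|) < ε. In other words, this minimum tends to 0 as v(u) → 0 over nonnegative u, uniformly with respect to admissible coefficients. -/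
/-!
The argument is quantitative. Let `M = max |f_i(u)| > 0`, attained at `i₀`. Since
`g(u) ≤ N * M ^ p`, the hypothesis `v(u) < δ` with `δ = s ^ p * s / N` gives
`u_i * (|f_i| / M) ^ p < s ^ p * s` for every `i`. Put `I = {i | u_i < s}`. It contains `i₀`,
because the ratio is `1` there and `s ≤ 1`, and for `j ∉ I` the inequality forces
`|f_j| ≤ s * M`. Hence the sum attached to `I` is at most `N * s * (1 + M)`, and it remains to
bound `M` by a constant depending only on `N` and `κ`.

On `J = Iᶜ` the restriction of `u` solves the linear system with matrix `A_J` and right-hand side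
`m_J - f_J - A_{J,I} u_I`, which is `O(1 + s * M)`. As `det A_J ≥ κ` and the entries of `A` are
bounded, Cramer's rule (`abs_le_of_minorP`) gives `u = O(1 + s * M)`, so `M ≤ B + D * s * M`, and
`M ≤ 2 * B` as soon as `D * s ≤ 1 / 2`.
Of the bordered determinants, only `Δ_{∅,i} = m_i` is needed, for a lower bound on `m_i`.
-/


open MeasureTheory Filter

lemma IsAdmissible.le_m {N : ℕ} {κ : ℝ} {A : Matrix (Fin N) (Fin N) ℝ} {m : Fin N → ℝ}
    (h : IsAdmissible κ A m) (i : Fin N) : κ ≤ m i := by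
  have hi := h.2.2.2 ∅ i (by simp)
  rw [minorM] at hi
  have : IsEmpty {x : Fin N // x ∈ (∅ : Finset (Fin N))} := ⟨fun x => Finset.notMem_empty _ x.2⟩
  letI : Unique (Option {x : Fin N // x ∈ (∅ : Finset (Fin N))}) :=
    ⟨⟨none⟩, fun a => by cases a with
      | none => rfl
      | some a => exact isEmptyElim a⟩
  rw [Matrix.det_unique] at hi
  exact hi

/-- The adjugate bound for inverting a matrix with bounded entries and determinant at least `κ`:
the entries of the adjugate are determinants, each at most `n! * K ^ n`. -/
lemma abs_le_of_det {n : Type*} [Fintype n] [DecidableEq n] (B : Matrix n n ℝ) {K κ R : ℝ}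
    (hK : 1 ≤ K) (hκ : 0 < κ) (hB : ∀ i j, |B i j| ≤ K) (hdet : κ ≤ B.det)
    (x : n → ℝ) (hx : ∀ i, |B.mulVec x i| ≤ R) (i : n) :
    |x i| ≤ Fintype.card n * (((Fintype.card n).factorial * K ^ Fintype.card n) * R) / κ := by
  have hadj : ∀ i j, |B.adjugate i j| ≤ (Fintype.card n).factorial * K ^ Fintype.card n := by
    intro i j
    rw [Matrix.adjugate_apply, ← nsmul_eq_mul]
    refine Matrix.det_le (abv := AbsoluteValue.abs) (fun k l => ?_)
    change |_| ≤ K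
    rw [Matrix.updateRow_apply]
    split_ifs
    · rw [Pi.single_apply]
      split_ifs <;> simp <;> linarith
    · exact hB k l
  have key : B.det * x i = ∑ j, B.adjugate i j * B.mulVec x j := by
    have h : B.adjugate.mulVec (B.mulVec x) = B.det • x := by
      rw [Matrix.mulVec_mulVec, Matrix.adjugate_mul, Matrix.smul_mulVec, Matrix.one_mulVec]
    have := congrFun h i
    simpa [Matrix.mulVec, dotProduct] using this.symm
  rw [le_div_iff₀ hκ]
  calc |x i| * κ ≤ |x i| * |B.det| := by
        gcongr
        exact hdet.trans (le_abs_self _)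
    _ = |∑ j, B.adjugate i j * B.mulVec x j| := by rw [← key, abs_mul, mul_comm]
    _ ≤ ∑ j, |B.adjugate i j * B.mulVec x j| := Finset.abs_sum_le_sum_abs _ _
    _ ≤ ∑ _j : n, ((Fintype.card n).factorial * K ^ Fintype.card n) * R := by
        refine Finset.sum_le_sum fun j _ => ?_
        rw [abs_mul]
        exact mul_le_mul (hadj i j) (hx j) (abs_nonneg _) (by positivity)
    _ = _ := by simp

/-- Uniform invertibility of all principal submatrices of `A`, with a constant that depends on
neither `A` nor the index set `J`. -/
lemma abs_le_of_minorP {N : ℕ} (A : Matrix (Fin N) (Fin N) ℝ) {K κ R : ℝ} (hK : 1 ≤ K)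
    (hκ : 0 < κ) (hR : 0 ≤ R) (hA : ∀ i j, |A i j| ≤ K) (J : Finset (Fin N))
    (hdet : κ ≤ minorP A J) (u : Fin N → ℝ) (hu : ∀ j ∈ J, |∑ k ∈ J, A j k * u k| ≤ R)
    (j : Fin N) (hj : j ∈ J) :
    |u j| ≤ N * (N.factorial * K ^ N) / κ * R := by
  have h := abs_le_of_det (Matrix.of fun i j : {x : Fin N // x ∈ J} => A i.1 j.1) hK hκ
    (fun i j => hA i j) hdet (fun i => u i) (R := R) (fun i => by
      have := hu i i.2
      rw [← Finset.sum_coe_sort] at this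
      simpa [Matrix.mulVec, dotProduct] using this) ⟨j, hj⟩
  have hc : Fintype.card {x : Fin N // x ∈ J} ≤ N := by
    simpa using Finset.card_le_univ J
  refine h.trans ?_
  rw [div_mul_eq_mul_div, mul_assoc (N : ℝ)]
  gcongr

/-- An a priori bound on `M = |f_{i₀}(u)|`, independent of `A`, `m`, `u` and `s`, for `s` small,
when `u_i ≤ s` on `I` and `|f_j(u)| ≤ s * M` off `I`. -/
lemma max_fComp_le {N : ℕ} (A : Matrix (Fin N) (Fin N) ℝ) (m : Fin N → ℝ) {K κ s M C : ℝ}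
    (hK : 1 ≤ K) (hκ : 0 < κ) (hA : ∀ i j, |A i j| ≤ K) (hm : ∀ i, |m i| ≤ K)
    (hdet : ∀ J, κ ≤ minorP A J) (u : Fin N → ℝ) (hu : ∀ i, 0 ≤ u i)
    (hs : 0 < s) (hs1 : s ≤ 1) (hM : 0 ≤ M) (hC : C = N * (N.factorial * K ^ N) / κ)
    (hsmall : N * K * C * s ≤ 1 / 2)
    (i₀ : Fin N) (hi₀ : |fComp A m u i₀| = M)
    (I : Finset (Fin N)) (hI : ∀ i ∈ I, u i ≤ s) (hJ : ∀ j ∉ I, |fComp A m u j| ≤ s * M) :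
    M ≤ 2 * (K + N * K + N * K * C * (K + N * K)) := by
  have hC0 : 0 ≤ C := by rw [hC]; positivity
  have hR : 0 ≤ K + s * M + N * K := by positivity
  have hJu : ∀ j ∈ Iᶜ, |u j| ≤ C * (K + s * M + N * K) := by
    rw [hC]
    refine abs_le_of_minorP A hK hκ hR hA Iᶜ (hdet _) u fun j hj => ?_
    have e : ∑ k ∈ Iᶜ, A j k * u k = m j - fComp A m u j - ∑ k ∈ I, A j k * u k := by
      rw [fComp, ← Finset.sum_add_sum_compl I]
      ring
    have h1 : |∑ k ∈ I, A j k * u k| ≤ N * K := by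
      calc _ ≤ ∑ k ∈ I, |A j k * u k| := Finset.abs_sum_le_sum_abs _ _
        _ ≤ ∑ k ∈ I, K := by
            refine Finset.sum_le_sum fun k hk => ?_
            rw [abs_mul, abs_of_nonneg (hu k)]
            nlinarith [hA j k, hI k hk, hu k, abs_nonneg (A j k)]
        _ = I.card * K := by simp
        _ ≤ N * K := by
            gcongr
            simpa using Finset.card_le_univ I
    have h2 := hJ j (by simpa using hj)
    have h3 := hm j
    rw [abs_le] at h1 h2 h3
    rw [e, abs_le]
    constructor <;> linarith
  have hU : ∀ i, u i ≤ C * (K + s * M + N * K) + 1 := by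
    intro i
    by_cases hi : i ∈ I
    · have := hI i hi
      have : 0 ≤ C * (K + s * M + N * K) := by positivity
      linarith
    · have := hJu i (by simpa using hi)
      rw [abs_of_nonneg (hu i)] at this
      linarith
  have hS : |∑ k, A i₀ k * u k| ≤ N * (K * (C * (K + s * M + N * K) + 1)) := by
    calc _ ≤ ∑ k, |A i₀ k * u k| := Finset.abs_sum_le_sum_abs _ _
      _ ≤ ∑ _k : Fin N, K * (C * (K + s * M + N * K) + 1) := by
          refine Finset.sum_le_sum fun k _ => ?_
          rw [abs_mul, abs_of_nonneg (hu k)]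
          exact mul_le_mul (hA _ _) (hU k) (hu k) (by linarith)
      _ = _ := by simp
  have hfin : M ≤ K + N * (K * (C * (K + s * M + N * K) + 1)) := by
    calc M = |m i₀ - ∑ k, A i₀ k * u k| := hi₀.symm
      _ ≤ |m i₀| + |∑ k, A i₀ k * u k| := abs_sub _ _
      _ ≤ _ := add_le_add (hm i₀) hS
  have := mul_le_mul_of_nonneg_right hsmall hM
  nlinarith

/-- For every `ε > 0` there is `δ > 0` depending only on `ε`, `N`, `p`, `κ` such that for
every admissible pair and every nonnegative `u` with `g(u) ≠ 0` and `v(u) < δ`, the minimum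
over nonempty `I` of `Σ_{i ∈ I} u_i + Σ_{j ∉ I} |f_j(u)|` is `< ε`. -/
theorem min_over_index_sets_tendsto_zero_uniform {N : ℕ} (hN : 0 < N) (p κ : ℝ)
    (hp : 1 ≤ p) (hκ : 0 < κ) :
    ∀ ε : ℝ, 0 < ε → ∃ δ : ℝ, 0 < δ ∧
      ∀ (A : Matrix (Fin N) (Fin N) ℝ) (m : Fin N → ℝ), IsAdmissible κ A m →
        ∀ u : Fin N → ℝ, (∀ i, 0 ≤ u i) → (∑ i, |fComp A m u i| ^ p) ≠ 0 →
          (∑ i, u i * |fComp A m u i| ^ p) / (∑ i, |fComp A m u i| ^ p) < δ →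
          ∃ I : Finset (Fin N), I.Nonempty ∧
            (∑ i ∈ I, u i) + (∑ j ∈ Iᶜ, |fComp A m u j|) < ε := by
  intro ε hε
  have hN' : (0 : ℝ) < N := by exact_mod_cast hN
  have hp0 : 0 < p := by linarith
  obtain ⟨K, hKdef⟩ : ∃ K : ℝ, K = 1 + 1 / κ := ⟨_, rfl⟩
  have hκ' : 0 < 1 / κ := by positivity
  have hK : 1 ≤ K := by linarith
  obtain ⟨C, hC⟩ : ∃ C : ℝ, C = N * (N.factorial * K ^ N) / κ := ⟨_, rfl⟩
  have hC0 : 0 ≤ C := by rw [hC]; positivity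
  obtain ⟨B, hB⟩ : ∃ B : ℝ, B = K + N * K + N * K * C * (K + N * K) := ⟨_, rfl⟩
  have hB0 : 0 ≤ B := by rw [hB]; positivity
  obtain ⟨s, hs, hs1, hs2, hs3⟩ : ∃ s : ℝ, 0 < s ∧ s ≤ 1 ∧ N * K * C * s ≤ 1 / 2 ∧
      N * (1 + 2 * B) * s ≤ ε / 2 := by
    have hD : 0 < 2 * (N * K * C + 1) := by positivity
    have hE : 0 < 2 * (N * (1 + 2 * B)) := by positivity
    refine ⟨min 1 (min (1 / (2 * (N * K * C + 1))) (ε / (2 * (N * (1 + 2 * B))))),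
      by positivity, min_le_left _ _, ?_, ?_⟩
    · have h := (min_le_right 1 _).trans (min_le_left
        (1 / (2 * (N * K * C + 1))) (ε / (2 * (N * (1 + 2 * B)))))
      have hpos : 0 < min 1 (min (1 / (2 * (N * K * C + 1))) (ε / (2 * (N * (1 + 2 * B))))) := by
        positivity
      rw [le_div_iff₀ hD] at h
      linarith
    · have h := (min_le_right 1 _).trans (min_le_right
        (1 / (2 * (N * K * C + 1))) (ε / (2 * (N * (1 + 2 * B)))))
      rw [le_div_iff₀ hE] at h
      linarith
  have hsp : 0 < s ^ p := Real.rpow_pos_of_pos hs p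
  refine ⟨s ^ p * s / N, by positivity, fun A m hadm u hu hg hv => ?_⟩
  have : Nonempty (Fin N) := ⟨⟨0, hN⟩⟩
  obtain ⟨i₀, hmax⟩ := Finite.exists_max (fun i => |fComp A m u i|)
  obtain ⟨M, hMdef⟩ : ∃ M : ℝ, |fComp A m u i₀| = M := ⟨_, rfl⟩
  simp only [hMdef] at hmax
  have hM0 : 0 ≤ M := hMdef ▸ abs_nonneg _
  have hg0 : 0 < ∑ i, |fComp A m u i| ^ p :=
    lt_of_le_of_ne (Finset.sum_nonneg fun i _ => by positivity) hg.symm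
  have hgM : ∑ i, |fComp A m u i| ^ p ≤ N * M ^ p := by
    calc _ ≤ ∑ _i : Fin N, M ^ p := Finset.sum_le_sum fun i _ =>
          Real.rpow_le_rpow (abs_nonneg _) (hmax i) hp0.le
      _ = _ := by simp
  have hMp : 0 < M ^ p := by
    have := hg0.trans_le hgM
    exact (mul_pos_iff_of_pos_left hN').1 this
  have hterm : ∀ i, u i * |fComp A m u i| ^ p < s ^ p * s * M ^ p := by
    intro i
    rw [div_lt_iff₀ hg0] at hv
    calc u i * |fComp A m u i| ^ p ≤ ∑ i, u i * |fComp A m u i| ^ p :=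
          Finset.single_le_sum (f := fun i => u i * |fComp A m u i| ^ p)
            (fun i _ => mul_nonneg (hu i) (by positivity)) (Finset.mem_univ i)
      _ < _ := hv
      _ ≤ s ^ p * s / N * (N * M ^ p) := by gcongr
      _ = _ := by field_simp
  have hI : ∀ i ∈ Finset.univ.filter (fun i => u i < s), u i ≤ s := by
    intro i hi
    exact (Finset.mem_filter.1 hi).2.le
  have hJ : ∀ j ∉ Finset.univ.filter (fun i => u i < s), |fComp A m u j| ≤ s * M := by
    intro j hj
    have hj' : s ≤ u j := by simpa using hj
    by_contra hlt
    push Not at hlt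
    have h1 : (s * M) ^ p ≤ |fComp A m u j| ^ p :=
      Real.rpow_le_rpow (by positivity) hlt.le hp0.le
    rw [Real.mul_rpow hs.le hM0] at h1
    have h2 : s * (s ^ p * M ^ p) ≤ u j * |fComp A m u j| ^ p :=
      mul_le_mul hj' h1 (by positivity) (hu j)
    linarith [hterm j]
  have hi₀ : u i₀ < s := by
    have h := hterm i₀
    rw [hMdef] at h
    have h1 := lt_of_mul_lt_mul_right h hMp.le
    have h2 : s ^ p ≤ 1 := Real.rpow_le_one hs.le hs1 hp0.le
    nlinarith
  have hMB : M ≤ 2 * B := by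
    rw [hB]
    refine max_fComp_le A m hK hκ (fun i j => (hadm.1 i j).trans (by linarith)) (fun i => ?_)
      hadm.2.2.1 u hu hs hs1 hM0 hC hs2 i₀ hMdef _ hI hJ
    rw [abs_of_nonneg (hκ.le.trans (hadm.le_m i))]
    exact (hadm.2.1 i).trans (by linarith)
  refine ⟨Finset.univ.filter (fun i => u i < s), ⟨i₀, by simpa using hi₀⟩, ?_⟩
  have hc : ∀ S : Finset (Fin N), (S.card : ℝ) ≤ N := fun S => by
    exact_mod_cast (by simpa using Finset.card_le_univ S)
  have e1 := Finset.sum_le_card_nsmul _ u s hI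
  have e2 := Finset.sum_le_card_nsmul (Finset.univ.filter (fun i => u i < s))ᶜ
    (fun j => |fComp A m u j|) (s * (2 * B)) (fun j hj =>
      (hJ j (Finset.mem_compl.1 hj)).trans (by gcongr))
  rw [nsmul_eq_mul] at e1 e2
  have e3 := mul_le_mul_of_nonneg_right (hc (Finset.univ.filter (fun i => u i < s))) hs.le
  have e4 := mul_le_mul_of_nonneg_right (hc (Finset.univ.filter (fun i => u i < s))ᶜ)
    (by positivity : 0 ≤ s * (2 * B))
  linarith
end

section
/- There exist ε₀ > 0 and σ > 0, depending only on N, p and κ but not on the particular admissible coefficients, such that for every admissible pair (A, m) with constant κ and every u ∈ ℝ^N with u ≥ 0, g(u) ≠ 0 and v(u) < ε₀, there exists an index i ∈ {1,…,N} with f_i(u) > σ. -/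
/-!
The pair `(1, u)` is rescaled to `(t, w) = (1, u) / (1 + ∑ u_i)`, a point of the standard simplex,
and `f` becomes the homogeneous function `F_i = t m_i - ∑ a_ij w_j`. The set of all
`(A, m, t, w)` with `(A, m)` admissible is compact, so unbounded `u` (that is, `t → 0`) needs no
separate treatment.

On this compact set the continuous function
`φ = ∑ w_i |F_i|^p + ∑ max (F_i, 0) + ∏ w_i` is strictly positive (`no_degenerate_point`):
if it vanished, let `I` be the support of `w`. It misses some index `j` because `∏ w_i = 0`,
and `F` vanishes on `I`. Hence the bordered matrix defining `Δ_{I,j}` sends `(-w_I, t)` to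
`(0, F_j)`, and Cramer's rule gives `t Δ_{I,j} = F_j Δ_I`. As `F_j ≤ 0` this forces
`t = F_j = 0`, and then the invertibility of the bordered matrix forces `w = 0`, which is absurd.

So `φ ≥ δ > 0` for a `δ` depending only on `N`, `p`, `κ`. On the other hand, if `v(u) < ε` and
all `f_i(u) ≤ σ`, then some `u_i < ε`, since `v(u)` is a weighted mean of the `u_i`, and `φ` is at
most `ε C + N σ + ε`, where `C` bounds `∑ |F_i|^p` on the compact set.
-/

open MeasureTheory Filter

/-- The matrix whose determinant is `Δ_{I,j}`; the index `none` stands for the last row and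
column. -/
def borderedMatrix {N : ℕ} (A : Matrix (Fin N) (Fin N) ℝ) (m : Fin N → ℝ)
    (I : Finset (Fin N)) (j : Fin N) :
    Matrix (Option {x : Fin N // x ∈ I}) (Option {x : Fin N // x ∈ I}) ℝ :=
  Matrix.of fun k l =>
    match k, l with
    | some k', some l' => A k'.1 l'.1
    | some k', none => m k'.1
    | none, some l' => A j l'.1
    | none, none => m j

/-- The homogenization `F_i(t, w) = t m_i - ∑ a_ij w_j` of `f_i`. -/
def homF {N : ℕ} (A : Matrix (Fin N) (Fin N) ℝ) (m : Fin N → ℝ) (t : ℝ) (w : Fin N → ℝ)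
    (i : Fin N) : ℝ :=
  t * m i - ∑ j, A i j * w j

/-- Replacing the last column of the bordered matrix by `c` times the last basis vector makes it
block triangular. -/
lemma det_updateCol_bordered {N : ℕ} (A : Matrix (Fin N) (Fin N) ℝ) (m : Fin N → ℝ)
    (I : Finset (Fin N)) (j : Fin N) (c : ℝ) :
    ((borderedMatrix A m I j).updateCol none (Pi.single none c)).det = c * minorP A I := by
  rw [← Matrix.det_reindex_self (Equiv.optionEquivSumPUnit.{0} {x : Fin N // x ∈ I})]
  have h : Matrix.reindex (Equiv.optionEquivSumPUnit.{0} {x : Fin N // x ∈ I})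
      (Equiv.optionEquivSumPUnit.{0} {x : Fin N // x ∈ I})
      ((borderedMatrix A m I j).updateCol none (Pi.single none c)) =
      Matrix.fromBlocks (Matrix.of fun k l : {x : Fin N // x ∈ I} => A k.1 l.1) 0
        (Matrix.of fun _ l => A j l.1) (Matrix.of fun _ _ => c) := by
    ext a b
    rcases a with a | a <;> rcases b with b | b <;>
      simp [borderedMatrix]
  rw [h, Matrix.det_fromBlocks_zero₁₂, minorP, mul_comm]
  simp

/-- The function `φ` of the main argument cannot vanish. -/
lemma no_degenerate_point {N : ℕ} {κ : ℝ} (hκ : 0 < κ) {A : Matrix (Fin N) (Fin N) ℝ}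
    {m : Fin N → ℝ} (hA : IsAdmissible κ A m) {t : ℝ} {w : Fin N → ℝ} (ht : 0 ≤ t)
    (hsum : t + ∑ i, w i = 1) (hF : ∀ i, homF A m t w i ≤ 0)
    (hwF : ∀ i, w i = 0 ∨ homF A m t w i = 0) (j : Fin N) (hj : w j = 0) : False := by
  obtain ⟨-, -, hP, hM⟩ := hA
  set I : Finset (Fin N) := Finset.univ.filter fun i => w i ≠ 0 with hI
  have hjI : j ∉ I := by simp [hI, hj]
  let x : Option {x : Fin N // x ∈ I} → ℝ := fun k => k.elim t fun k' => -w k'.1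
  have hsumI : ∀ i, ∑ l : {x : Fin N // x ∈ I}, A i l.1 * w l.1 = ∑ l, A i l * w l := by
    intro i
    rw [Finset.sum_coe_sort I (fun l => A i l * w l)]
    refine Finset.sum_subset (Finset.subset_univ _) fun l _ hl => ?_
    have : w l = 0 := by simpa [hI] using hl
    simp [this]
  have hBx : (borderedMatrix A m I j).mulVec x = Pi.single none (homF A m t w j) := by
    ext k
    rcases k with _ | k
    · simp only [Matrix.mulVec, dotProduct, Fintype.sum_option, borderedMatrix, Matrix.of_apply,
        x, Option.elim, Pi.single_eq_same, mul_neg, Finset.sum_neg_distrib, hsumI, homF]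
      ring
    · have hk : homF A m t w k.1 = 0 :=
        (hwF k.1).resolve_left (Finset.mem_filter.mp k.2).2
      have : (Pi.single none (homF A m t w j) : Option {x : Fin N // x ∈ I} → ℝ) (some k) =
          homF A m t w k.1 := by rw [hk]; simp
      rw [this]
      simp only [Matrix.mulVec, dotProduct, Fintype.sum_option, borderedMatrix, Matrix.of_apply,
        x, Option.elim, mul_neg, Finset.sum_neg_distrib, hsumI, homF]
      ring
  have hdet : (borderedMatrix A m I j).det = minorM A m I j := rfl
  have hMpos : 0 < minorM A m I j := hκ.trans_le (hM I j hjI)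
  have hPpos : 0 < minorP A I := hκ.trans_le (hP I)
  have hcr : minorM A m I j * t = homF A m t w j * minorP A I := by
    have h := congrFun (Matrix.cramer_eq_adjugate_mulVec (borderedMatrix A m I j)
      ((borderedMatrix A m I j).mulVec x)) none
    rw [Matrix.mulVec_mulVec, Matrix.adjugate_mul, Matrix.cramer_apply, hBx,
      det_updateCol_bordered, hdet] at h
    rw [h]
    simp [x, Matrix.smul_mulVec]
  have hFj : homF A m t w j = 0 := by
    refine le_antisymm (hF j) ?_
    by_contra hneg
    have h1 := mul_neg_of_neg_of_pos (not_le.mp hneg) hPpos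
    have h2 := mul_nonneg hMpos.le ht
    linarith
  have hx : x = 0 := by
    refine Matrix.eq_zero_of_mulVec_eq_zero (M := borderedMatrix A m I j) ?_ ?_
    · rw [hdet]; exact hMpos.ne'
    · rw [hBx, hFj, Pi.single_zero]
  have ht0 : t = 0 := congrFun hx none
  have hw0 : ∀ i, w i = 0 := by
    intro i
    by_contra hi
    have hiI : i ∈ I := by simp [hI, hi]
    have : -w i = 0 := congrFun hx (some ⟨i, hiI⟩)
    exact hi (by linarith)
  simp [ht0, hw0] at hsum

/-- The parameter space `(A, m, t, w)` of the compactness argument: `(A, m)` is admissible and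
`(t, w)` lies in the standard simplex. -/
def paramSet (N : ℕ) (κ : ℝ) :
    Set ((Fin N → Fin N → ℝ) × (Fin N → ℝ) × ℝ × (Fin N → ℝ)) :=
  {x | IsAdmissible κ (Matrix.of x.1) x.2.1 ∧ 0 ≤ x.2.2.1 ∧ (∀ i, 0 ≤ x.2.2.2 i) ∧
    x.2.2.1 + ∑ i, x.2.2.2 i = 1}

lemma continuous_minorP {N : ℕ} (I : Finset (Fin N)) :
    Continuous fun A : Fin N → Fin N → ℝ => minorP (Matrix.of A) I := by
  unfold minorP
  refine Continuous.matrix_det (continuous_matrix fun i j => ?_)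
  simp only [Matrix.of_apply]
  fun_prop

lemma continuous_minorM {N : ℕ} (I : Finset (Fin N)) (j : Fin N) :
    Continuous fun x : (Fin N → Fin N → ℝ) × (Fin N → ℝ) =>
      minorM (Matrix.of x.1) x.2 I j := by
  unfold minorM
  refine Continuous.matrix_det (continuous_matrix fun k l => ?_)
  rcases k with _ | k <;> rcases l with _ | l <;> simp only [Matrix.of_apply] <;> fun_prop

lemma isCompact_paramSet (N : ℕ) (κ : ℝ) (hκ : 0 < κ) : IsCompact (paramSet N κ) := by
  refine IsCompact.of_isClosed_subset
    (isCompact_Icc (a := ((fun _ _ => -(1 / κ), fun _ => 0, 0, fun _ => 0) :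
      (Fin N → Fin N → ℝ) × (Fin N → ℝ) × ℝ × (Fin N → ℝ)))
      (b := (fun _ _ => 1 / κ, fun _ => 1 / κ, 1, fun _ => 1))) ?_ ?_
  · simp only [paramSet, IsAdmissible, Set.ofPred_and, Set.ofPred_forall, Matrix.of_apply]
    refine IsClosed.inter (IsClosed.inter ?_ (IsClosed.inter ?_ (IsClosed.inter ?_ ?_)))
      (IsClosed.inter ?_ (IsClosed.inter ?_ ?_))
    · exact isClosed_iInter fun i => isClosed_iInter fun j =>
        isClosed_le (by fun_prop) continuous_const
    · exact isClosed_iInter fun i => isClosed_le (by fun_prop) continuous_const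
    · exact isClosed_iInter fun I => isClosed_le continuous_const
        ((continuous_minorP I).comp continuous_fst)
    · exact isClosed_iInter fun I => isClosed_iInter fun j => isClosed_iInter fun _ =>
        isClosed_le continuous_const ((continuous_minorM I j).comp
          (continuous_fst.prodMk (continuous_fst.comp continuous_snd)))
    · exact isClosed_le continuous_const (by fun_prop)
    · exact isClosed_iInter fun i => isClosed_le continuous_const (by fun_prop)
    · exact isClosed_eq (by fun_prop) continuous_const
  · rintro ⟨A, m, t, w⟩ ⟨⟨hA, hm, -, hM⟩, ht, hw, hs⟩
    -- the lower bound on `m` is the case `I = ∅` of the condition on bordered determinants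
    have hm0 : ∀ i, 0 ≤ m i := by
      intro i
      have h := hM ∅ i (Finset.notMem_empty i)
      have h' : minorM (Matrix.of A) m ∅ i = m i := by
        have := Matrix.det_unique (borderedMatrix (Matrix.of A) m ∅ i)
        exact this
      rw [h'] at h
      exact hκ.le.trans h
    have hsum : 0 ≤ ∑ i, w i := Finset.sum_nonneg fun i _ => hw i
    have hw1 : ∀ i, w i ≤ ∑ i, w i := fun i =>
      Finset.single_le_sum (fun i _ => hw i) (Finset.mem_univ i)
    dsimp only at ht hw hs
    refine ⟨⟨fun i j => (abs_le.mp (hA i j)).1, hm0, ht, hw⟩,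
      ⟨fun i j => (abs_le.mp (hA i j)).2, hm, ?_, fun i => ?_⟩⟩
    · change t ≤ 1
      linarith
    · change w i ≤ 1
      linarith [hw1 i]

lemma continuous_homF {N : ℕ} (i : Fin N) :
    Continuous fun x : (Fin N → Fin N → ℝ) × (Fin N → ℝ) × ℝ × (Fin N → ℝ) =>
      homF (Matrix.of x.1) x.2.1 x.2.2.1 x.2.2.2 i := by
  simp only [homF, Matrix.of_apply]
  fun_prop

lemma continuous_abs_homF_rpow {N : ℕ} {p : ℝ} (hp : 1 ≤ p) (i : Fin N) :
    Continuous fun x : (Fin N → Fin N → ℝ) × (Fin N → ℝ) × ℝ × (Fin N → ℝ) =>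
      |homF (Matrix.of x.1) x.2.1 x.2.2.1 x.2.2.2 i| ^ p :=
  (continuous_homF i).abs.rpow_const fun _ => Or.inr (by linarith)

/-- The positive lower bound for the function `φ` on the parameter space. -/
lemma exists_lower_bound {N : ℕ} {p κ : ℝ} (hp : 1 ≤ p) (hκ : 0 < κ) :
    ∃ δ : ℝ, 0 < δ ∧ ∀ x ∈ paramSet N κ,
      δ ≤ ∑ i, x.2.2.2 i * |homF (Matrix.of x.1) x.2.1 x.2.2.1 x.2.2.2 i| ^ p +
        ∑ i, max (homF (Matrix.of x.1) x.2.1 x.2.2.1 x.2.2.2 i) 0 + ∏ i, x.2.2.2 i := by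
  refine (isCompact_paramSet N κ hκ).exists_forall_le' ?_ ?_
  · refine Continuous.continuousOn (((continuous_finsetSum _ fun i _ => ?_).add
      (continuous_finsetSum _ fun i _ => ?_)).add (continuous_finsetProd _ fun i _ => ?_))
    · exact Continuous.mul (by fun_prop) (continuous_abs_homF_rpow hp i)
    · exact (continuous_homF i).max continuous_const
    · fun_prop
  · rintro ⟨A, m, t, w⟩ ⟨hA, ht, hw, hs⟩
    dsimp only at hA ht hw hs ⊢
    have h1 : ∀ i ∈ Finset.univ, 0 ≤ w i * |homF (Matrix.of A) m t w i| ^ p :=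
      fun i _ => mul_nonneg (hw i) (Real.rpow_nonneg (abs_nonneg _) _)
    have h2 : ∀ i ∈ Finset.univ, 0 ≤ max (homF (Matrix.of A) m t w i) 0 :=
      fun i _ => le_max_right _ _
    have s1 := Finset.sum_nonneg h1
    have s2 := Finset.sum_nonneg h2
    have s3 : 0 ≤ ∏ i, w i := Finset.prod_nonneg fun i _ => hw i
    by_contra hcon
    have e1 := (Finset.sum_eq_zero_iff_of_nonneg h1).mp (by linarith)
    have e2 := (Finset.sum_eq_zero_iff_of_nonneg h2).mp (by linarith)
    obtain ⟨j, -, hj⟩ := Finset.prod_eq_zero_iff.mp (show ∏ i, w i = 0 by linarith)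
    refine no_degenerate_point hκ hA ht hs (fun i => ?_) (fun i => ?_) j hj
    · exact max_eq_right_iff.mp (e2 i (Finset.mem_univ i))
    · rcases mul_eq_zero.mp (e1 i (Finset.mem_univ i)) with h | h
      · exact Or.inl h
      · rw [Real.rpow_eq_zero (abs_nonneg _) (by linarith)] at h
        exact Or.inr (abs_eq_zero.mp h)

/-- The upper bound for `φ` at the rescaled point: it is small when `v(u) < ε` and all
`f_i(u) ≤ σ`. -/
lemma exists_param_of_small {N : ℕ} {p κ C ε σ : ℝ} (hσ0 : 0 < σ) (hε0 : 0 < ε)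
    (hC : ∀ x ∈ paramSet N κ,
      ‖∑ i, |homF (Matrix.of x.1) x.2.1 x.2.2.1 x.2.2.2 i| ^ p‖ ≤ C)
    {A : Matrix (Fin N) (Fin N) ℝ} {m : Fin N → ℝ} (hA : IsAdmissible κ A m)
    {u : Fin N → ℝ} (hu : ∀ i, 0 ≤ u i) (hg : (∑ i, |fComp A m u i| ^ p) ≠ 0)
    (hv : (∑ i, u i * |fComp A m u i| ^ p) / (∑ i, |fComp A m u i| ^ p) < ε)
    (hcon : ∀ i, fComp A m u i ≤ σ) :
    ∃ (t : ℝ) (w : Fin N → ℝ), (Matrix.of.symm A, m, t, w) ∈ paramSet N κ ∧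
      ∑ i, w i * |homF A m t w i| ^ p + ∑ i, max (homF A m t w i) 0 + ∏ i, w i ≤
        ε * |C| + N * σ + ε := by
  have hnn : ∀ i, 0 ≤ |fComp A m u i| ^ p := fun i => Real.rpow_nonneg (abs_nonneg _) _
  have hgpos : 0 < ∑ i, |fComp A m u i| ^ p :=
    lt_of_le_of_ne (Finset.sum_nonneg fun i _ => hnn i) hg.symm
  rw [div_lt_iff₀ hgpos] at hv
  obtain ⟨j, hj⟩ : ∃ j, u j < ε := by
    by_contra! h
    refine absurd hv (not_lt.mpr ?_)
    rw [Finset.mul_sum]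
    exact Finset.sum_le_sum fun i _ => mul_le_mul_of_nonneg_right (h i) (hnn i)
  have hS : 0 ≤ ∑ i, u i := Finset.sum_nonneg fun i _ => hu i
  obtain ⟨t, ht⟩ : ∃ t : ℝ, t = (1 + ∑ i, u i)⁻¹ := ⟨_, rfl⟩
  have ht0 : 0 < t := by rw [ht]; positivity
  have ht1 : t ≤ 1 := ht ▸ inv_le_one_of_one_le₀ (by linarith)
  obtain ⟨w, hw⟩ : ∃ w : Fin N → ℝ, ∀ i, w i = t * u i := ⟨_, fun _ => rfl⟩
  have hw0 : ∀ i, 0 ≤ w i := fun i => by rw [hw]; exact mul_nonneg ht0.le (hu i)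
  have hs : t + ∑ i, w i = 1 := by
    simp only [hw]
    rw [← Finset.mul_sum, ht]
    field_simp
  have hmem : (Matrix.of.symm A, m, t, w) ∈ paramSet N κ := ⟨hA, ht0.le, hw0, hs⟩
  have hC' : ‖∑ i, |homF A m t w i| ^ p‖ ≤ C := by
    simpa only [Equiv.apply_symm_apply] using hC _ hmem
  have hF : ∀ i, homF A m t w i = t * fComp A m u i := by
    intro i
    simp only [homF, fComp, hw, mul_sub, Finset.mul_sum]
    congr 1
    exact Finset.sum_congr rfl fun k _ => by ring
  have hFp : ∀ i, |homF A m t w i| ^ p = t ^ p * |fComp A m u i| ^ p := by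
    intro i
    rw [hF, abs_mul, abs_of_pos ht0, Real.mul_rpow ht0.le (abs_nonneg _)]
  have hG0 : 0 ≤ ∑ i, |homF A m t w i| ^ p :=
    Finset.sum_nonneg fun i _ => Real.rpow_nonneg (abs_nonneg _) _
  have hG : ∑ i, |homF A m t w i| ^ p ≤ |C| :=
    (le_abs_self _).trans (hC'.trans (le_abs_self C))
  have b1 : ∑ i, w i * |homF A m t w i| ^ p ≤ ε * |C| := by
    calc ∑ i, w i * |homF A m t w i| ^ p
        = t * (t ^ p * ∑ i, u i * |fComp A m u i| ^ p) := by
          simp only [hFp, hw, Finset.mul_sum]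
          exact Finset.sum_congr rfl fun k _ => by ring
      _ ≤ 1 * (t ^ p * (ε * ∑ i, |fComp A m u i| ^ p)) := by
          have : 0 ≤ ∑ i, u i * |fComp A m u i| ^ p :=
            Finset.sum_nonneg fun i _ => mul_nonneg (hu i) (hnn i)
          gcongr
      _ = ε * ∑ i, |homF A m t w i| ^ p := by
          simp only [hFp, ← Finset.mul_sum]
          ring
      _ ≤ ε * |C| := by gcongr
  have b2 : ∑ i, max (homF A m t w i) 0 ≤ N * σ := by
    have : ∀ i ∈ Finset.univ, max (homF A m t w i) 0 ≤ σ := by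
      intro i _
      refine max_le ?_ hσ0.le
      rw [hF]
      nlinarith [hcon i]
    simpa using Finset.sum_le_card_nsmul _ _ _ this
  have b3 : ∏ i, w i ≤ ε := by
    have hw1 : ∀ i, w i ≤ 1 := fun i => by
      have := Finset.single_le_sum (fun i _ => hw0 i) (Finset.mem_univ i)
      linarith
    rw [← Finset.mul_prod_erase _ _ (Finset.mem_univ j)]
    have h1 : ∏ i ∈ Finset.univ.erase j, w i ≤ 1 :=
      Finset.prod_le_one (fun i _ => hw0 i) fun i _ => hw1 i
    have h2 : w j ≤ ε := by
      have : w j ≤ u j := by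
        rw [hw]
        exact mul_le_of_le_one_left (hu j) ht1
      linarith
    exact (mul_le_of_le_one_right (hw0 j) h1).trans h2
  exact ⟨t, w, hmem, add_le_add (add_le_add b1 b2) b3⟩

/-- There exist `ε₀ > 0` and `σ > 0` depending only on `N`, `p`, `κ` such that for every
admissible pair and every nonnegative `u` with `g(u) ≠ 0` and `v(u) < ε₀`, some component
satisfies `f_i(u) > σ`. -/
theorem exists_large_f_of_small_v {N : ℕ} (hN : 0 < N) (p κ : ℝ) (hp : 1 ≤ p) (hκ : 0 < κ) :
    ∃ ε₀ σ : ℝ, 0 < ε₀ ∧ 0 < σ ∧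
      ∀ (A : Matrix (Fin N) (Fin N) ℝ) (m : Fin N → ℝ), IsAdmissible κ A m →
        ∀ u : Fin N → ℝ, (∀ i, 0 ≤ u i) → (∑ i, |fComp A m u i| ^ p) ≠ 0 →
          (∑ i, u i * |fComp A m u i| ^ p) / (∑ i, |fComp A m u i| ^ p) < ε₀ →
          ∃ i, σ < fComp A m u i := by
  obtain ⟨δ, hδ, hlow⟩ := exists_lower_bound (N := N) hp hκ
  obtain ⟨C, hC⟩ := (isCompact_paramSet N κ hκ).exists_bound_of_continuousOn
    (f := fun x => ∑ i, |homF (Matrix.of x.1) x.2.1 x.2.2.1 x.2.2.2 i| ^ p)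
    (continuous_finsetSum _ fun i _ => continuous_abs_homF_rpow hp i).continuousOn
  have hN' : (0 : ℝ) < N := by exact_mod_cast hN
  have hC1 : 0 < |C| + 1 := by positivity
  refine ⟨δ / (4 * (|C| + 1)), δ / (4 * N), by positivity, by positivity, ?_⟩
  intro A m hA u hu hg hv
  by_contra! hcon
  obtain ⟨t, w, hmem, hup⟩ := exists_param_of_small (σ := δ / (4 * N)) (by positivity)
    (by positivity) hC hA hu hg hv hcon
  have hlow' : δ ≤ ∑ i, w i * |homF A m t w i| ^ p + ∑ i, max (homF A m t w i) 0 + ∏ i, w i := by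
    simpa only [Equiv.apply_symm_apply] using hlow _ hmem
  have e1 : δ / (4 * (|C| + 1)) * |C| + δ / (4 * (|C| + 1)) = δ / 4 := by
    field_simp
  have e2 : N * (δ / (4 * N)) = δ / 4 := by
    field_simp
  linarith
end

section
/- Let (A, m) be an admissible pair with constant κ and let p ≥ 1. For u ∈ ℝ^N with u ≥ 0, the following are equivalent: (a) Σ_{i=1}^N u_i |f_i(u)|^p = 0 and Σ_{i=1}^N |f_i(u)|^p ≠ 0; (b) u = u_I for some nonempty index set I ⊆ {1,…,N}. -/
/-!
Both sums have nonnegative terms, so (a) says that `u i = 0` or `f_i(u) = 0` for every `i`, while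
some `f_i(u)` is nonzero.

Given (a), the set `I = {i | f_i(u) ≠ 0}` is nonempty and `u` solves the linear system that defines
`u_I`; this solution is unique because the principal minor over the complement of `I` is nonzero
(`eq_of_fComp_eq_zero`). Conversely, for `u = u_I` the first sum vanishes term by term, and
`f_j(u_I) ≠ 0` for every `j ∈ I` because the bordered determinant of row `j` over the complement
of `I` is nonzero (`fComp_ne_zero_of_minorM_ne_zero`).
-/

open MeasureTheory Filter

/-- If `u` vanishes off `J` and `f_k(u) = 0` on `J`, then `f_j(u) ≠ 0` for every `j` whose bordered
determinant over `J` is nonzero: otherwise `(-u_J, 1)` would lie in the kernel of the bordered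
matrix. -/
lemma fComp_ne_zero_of_minorM_ne_zero {N : ℕ} {A : Matrix (Fin N) (Fin N) ℝ} {m : Fin N → ℝ}
    {J : Finset (Fin N)} {j : Fin N} (hdet : minorM A m J j ≠ 0) {u : Fin N → ℝ}
    (hzero : ∀ i ∉ J, u i = 0) (hf : ∀ k ∈ J, fComp A m u k = 0) : fComp A m u j ≠ 0 := by
  intro hj
  have hsum : ∀ k, ∑ l : {x : Fin N // x ∈ J}, A k l.1 * u l.1 = ∑ l, A k l * u l := by
    intro k
    rw [Finset.sum_coe_sort J (fun l => A k l * u l)]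
    exact Finset.sum_subset (Finset.subset_univ J) fun i _ hi => by rw [hzero i hi, mul_zero]
  apply hdet
  unfold minorM
  rw [← Matrix.exists_mulVec_eq_zero_iff]
  refine ⟨fun o => o.elim 1 fun l => -u l.1, fun h => one_ne_zero (congrFun h none), ?_⟩
  funext o
  rcases o with _ | k
  · have := hsum j
    unfold fComp at hj
    simp only [Matrix.mulVec, dotProduct, Fintype.sum_option, Matrix.of_apply, Option.elim,
      mul_neg, mul_one, Finset.sum_neg_distrib, Pi.zero_apply, this]
    linarith
  · have := hsum k.1
    have hk := hf k.1 k.2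
    unfold fComp at hk
    simp only [Matrix.mulVec, dotProduct, Fintype.sum_option, Matrix.of_apply, Option.elim,
      mul_neg, mul_one, Finset.sum_neg_distrib, Pi.zero_apply, this]
    linarith

/-- Uniqueness of the solution of `u = 0` off `J`, `f(u) = 0` on `J`, when the principal minor over
`J` does not vanish. -/
lemma eq_of_fComp_eq_zero {N : ℕ} {A : Matrix (Fin N) (Fin N) ℝ} {m : Fin N → ℝ}
    {J : Finset (Fin N)} (hdet : minorP A J ≠ 0) {u v : Fin N → ℝ}
    (hu : ∀ i ∉ J, u i = 0) (hv : ∀ i ∉ J, v i = 0)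
    (hfu : ∀ k ∈ J, fComp A m u k = 0) (hfv : ∀ k ∈ J, fComp A m v k = 0) : u = v := by
  have hker := Matrix.eq_zero_of_mulVec_eq_zero hdet
    (v := fun l : {x : Fin N // x ∈ J} => u l.1 - v l.1) <| by
      funext k
      have h1 := hfu k.1 k.2
      have h2 := hfv k.1 k.2
      unfold fComp at h1 h2
      simp only [Matrix.mulVec, dotProduct, Matrix.of_apply, Pi.zero_apply]
      rw [Finset.sum_coe_sort J (fun l => A k.1 l * (u l - v l)),
        Finset.sum_subset (Finset.subset_univ J) fun i _ hi => by
          rw [hu i hi, hv i hi, sub_zero, mul_zero]]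
      simp only [mul_sub, Finset.sum_sub_distrib]
      linarith
  funext i
  by_cases hi : i ∈ J
  · exact sub_eq_zero.mp (congrFun hker ⟨i, hi⟩)
  · rw [hu i hi, hv i hi]

/-- For an admissible pair `(A, m)`, `p ≥ 1`, and nonnegative `u`, the following are
equivalent: (a) `Σ_i u_i |f_i(u)|^p = 0` and `Σ_i |f_i(u)|^p ≠ 0`; (b) `u = u_I` for some
nonempty index set `I`. -/
theorem v_eq_zero_iff_eq_uI {N : ℕ} (hN : 0 < N) (p κ : ℝ) (hp : 1 ≤ p) (hκ : 0 < κ)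
    (A : Matrix (Fin N) (Fin N) ℝ) (m : Fin N → ℝ) (hAm : IsAdmissible κ A m)
    (uI : Finset (Fin N) → Fin N → ℝ)
    (huI : ∀ I : Finset (Fin N), (∀ i ∈ I, uI I i = 0) ∧ ∀ j ∉ I, fComp A m (uI I) j = 0)
    (u : Fin N → ℝ) (hu : ∀ i, 0 ≤ u i) :
    ((∑ i, u i * |fComp A m u i| ^ p) = 0 ∧ (∑ i, |fComp A m u i| ^ p) ≠ 0) ↔
      ∃ I : Finset (Fin N), I.Nonempty ∧ u = uI I := by
  obtain ⟨-, -, hP, hM⟩ := hAm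
  have hp0 : p ≠ 0 := by linarith
  have hpow : ∀ x : ℝ, |x| ^ p = 0 ↔ x = 0 := fun x => by
    rw [Real.rpow_eq_zero (abs_nonneg x) hp0, abs_eq_zero]
  have hnn : ∀ x : ℝ, 0 ≤ |x| ^ p := fun x => Real.rpow_nonneg (abs_nonneg x) p
  have hsum1 : (∑ i, u i * |fComp A m u i| ^ p) = 0 ↔ ∀ i, u i = 0 ∨ fComp A m u i = 0 := by
    rw [Finset.sum_eq_zero_iff_of_nonneg fun i _ => mul_nonneg (hu i) (hnn _)]
    simp [mul_eq_zero, hpow]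
  have hsum2 : (∑ i, |fComp A m u i| ^ p) ≠ 0 ↔ ∃ i, fComp A m u i ≠ 0 := by
    rw [Ne, Finset.sum_eq_zero_iff_of_nonneg fun i _ => hnn _]
    simp [hpow]
  rw [hsum1, hsum2]
  constructor
  · rintro ⟨hor, i, hi⟩
    refine ⟨Finset.univ.filter fun i => fComp A m u i ≠ 0, ⟨i, by simpa using hi⟩, ?_⟩
    set I := Finset.univ.filter fun i => fComp A m u i ≠ 0 with hI
    refine eq_of_fComp_eq_zero (A := A) (m := m) (J := Iᶜ) (hκ.trans_le (hP _)).ne' ?_ ?_ ?_ ?_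
    · intro k hk
      have hk' : fComp A m u k ≠ 0 := by simpa [hI] using hk
      exact (hor k).resolve_right hk'
    · intro k hk
      exact (huI I).1 k (by simpa using hk)
    · intro k hk
      simpa [hI] using hk
    · intro k hk
      exact (huI I).2 k (Finset.mem_compl.mp hk)
  · rintro ⟨I, ⟨j, hj⟩, rfl⟩
    refine ⟨fun i => ?_, j, ?_⟩
    · by_cases hi : i ∈ I
      · exact Or.inl ((huI I).1 i hi)
      · exact Or.inr ((huI I).2 i hi)
    · refine fComp_ne_zero_of_minorM_ne_zero (J := Iᶜ)
        (hκ.trans_le (hM _ j (by simpa using hj))).ne' ?_ ?_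
      · intro k hk
        exact (huI I).1 k (by simpa using hk)
      · intro k hk
        exact (huI I).2 k (Finset.mem_compl.mp hk)
end

section
/- In the sequence setup described in the context, for every a > 0 one has |{x ∈ Ω : v_n(x) > ε_n} ∩ {x ∈ Ω : g_n(x) > a}| → 0 as n → ∞. -/
/-!
Write `h_n = ∑ i, u_i |f_i|^p`, so that `v_n > ε_n` means `ε_n g_n < h_n` where `g_n ≠ 0`. Integrating over this
set and using `∫ h_n ≤ ε_n² ∫ g_n` gives `∫_{v_n > ε_n} g_n ≤ ε_n ∫ g_n`, so by Markov's inequality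
everything reduces to a bound on `∫ g_n` that is uniform in `n`.

The bound comes from the pointwise fact `gBound`: if `h ≤ g` at a point, then `g ≤ C` there, with `C`
depending only on `N`, `p`, `κ`. Indeed, all principal minors of `A` are bounded below, hence by
compactness (`exists_index_large`) some index `i` has both `u_i` and `|(A u)_i|` at least `δ ∑ u`.
For large `R = ∑ u` this makes `h` of order at least `R^(p+1)`, while `g` is of order at most `R^p`.
Therefore `g_n ≤ C` on `{v_n ≤ ε_n}`, whence `∫ g_n ≤ ε_n ∫ g_n + C |Ω|`, and `∫ g_n ≤ 2 C |Ω|` as soon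
as `ε_n ≤ 1/2`.
-/

open MeasureTheory Filter

/-- Pointwise `f_{i}(x) = m_i(x) − Σ_j a_{ij}(x) u_j(x)` for coefficient fields on `ℝ^d`. -/
noncomputable def fSeq {d N : ℕ} (A : (Fin d → ℝ) → Matrix (Fin N) (Fin N) ℝ)
    (m : (Fin d → ℝ) → Fin N → ℝ) (u : (Fin d → ℝ) → Fin N → ℝ)
    (x : Fin d → ℝ) (i : Fin N) : ℝ :=
  m x i - ∑ j, A x i j * u x j

/-- Pointwise `g(x) = Σ_i |f_i(x)|^p`. -/
noncomputable def gSeq {d N : ℕ} (A : (Fin d → ℝ) → Matrix (Fin N) (Fin N) ℝ)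
    (m : (Fin d → ℝ) → Fin N → ℝ) (u : (Fin d → ℝ) → Fin N → ℝ)
    (p : ℝ) (x : Fin d → ℝ) : ℝ :=
  ∑ i, |fSeq A m u x i| ^ p

/-- Pointwise `v(x) = g(x)⁻¹ Σ_i u_i(x) |f_i(x)|^p` when `g(x) ≠ 0`, and
`v(x) = min_i u_i(x)` when `g(x) = 0`. -/
noncomputable def vSeq {d N : ℕ} (A : (Fin d → ℝ) → Matrix (Fin N) (Fin N) ℝ)
    (m : (Fin d → ℝ) → Fin N → ℝ) (u : (Fin d → ℝ) → Fin N → ℝ)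
    (p : ℝ) (x : Fin d → ℝ) : ℝ :=
  if gSeq A m u p x = 0 then ⨅ i, u x i
  else (∑ i, u x i * |fSeq A m u x i| ^ p) / gSeq A m u p x

/-- A nonzero nonnegative vector `w` cannot satisfy `w_i (A w)_i = 0` for every `i` when the principal
minors of `A` are nonzero: restricted to the support of `w`, the matrix is invertible and kills `w`. -/
lemma sum_min_pos {N : ℕ} (A : Matrix (Fin N) (Fin N) ℝ)
    (hA : ∀ I : Finset (Fin N), minorP A I ≠ 0) (w : Fin N → ℝ) (hw : w ∈ stdSimplex ℝ (Fin N)) :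
    0 < ∑ i, min (w i) |∑ j, A i j * w j| := by
  have hnn : ∀ i, 0 ≤ min (w i) |∑ j, A i j * w j| := fun i => le_min (hw.1 i) (abs_nonneg _)
  refine lt_of_le_of_ne (Finset.sum_nonneg fun i _ => hnn i) fun h0 => ?_
  have hz : ∀ i, min (w i) |∑ j, A i j * w j| = 0 := fun i =>
    (Finset.sum_eq_zero_iff_of_nonneg fun i _ => hnn i).1 h0.symm i (Finset.mem_univ i)
  set I : Finset (Fin N) := Finset.univ.filter fun i => w i ≠ 0 with hI
  have hker := Matrix.eq_zero_of_mulVec_eq_zero (hA I)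
    (v := fun i : {x : Fin N // x ∈ I} => w i.1) (by
      funext i
      have hi : w i.1 ≠ 0 := (Finset.mem_filter.1 i.2).2
      have hAi : ∑ j, A i.1 j * w j = 0 := by
        rcases min_choice (w i.1) |∑ j, A i.1 j * w j| with h | h
        · exact absurd (h.symm.trans (hz i.1)) hi
        · exact abs_eq_zero.1 (h.symm.trans (hz i.1))
      have hs : ∑ j : {x : Fin N // x ∈ I}, A i.1 j.1 * w j.1 = ∑ j ∈ I, A i.1 j * w j :=
        Finset.sum_coe_sort I fun j => A i.1 j * w j
      have hs' : ∑ j ∈ I, A i.1 j * w j = ∑ j, A i.1 j * w j := by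
        refine Finset.sum_subset (Finset.subset_univ I) fun j _ hj => ?_
        have : w j = 0 := by simpa [hI] using hj
        simp [this]
      simpa [Matrix.mulVec, dotProduct] using hs.trans (hs'.trans hAi))
  have hw0 : ∀ i, w i = 0 := by
    intro i
    by_contra hi
    exact hi (congrFun hker ⟨i, by simp [hI, hi]⟩)
  have := hw.2
  simp [hw0] at this

/-- Quantitative form of `sum_min_pos`, uniform over the compact set of matrices considered. -/
lemma exists_index_large {N : ℕ} (hN : 0 < N) {κ : ℝ} (hκ : 0 < κ) :
    ∃ δ : ℝ, 0 < δ ∧ ∀ (A : Matrix (Fin N) (Fin N) ℝ) (u : Fin N → ℝ),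
      (∀ i j, |A i j| ≤ 1 / κ) → (∀ I : Finset (Fin N), κ ≤ minorP A I) → (∀ i, 0 ≤ u i) →
      ∃ i, δ * ∑ j, u j ≤ u i ∧ δ * ∑ j, u j ≤ |∑ j, A i j * u j| := by
  let F : Matrix (Fin N) (Fin N) ℝ × (Fin N → ℝ) → ℝ :=
    fun q => ∑ i, min (q.2 i) |∑ j, q.1 i j * q.2 j|
  let B : Set (Matrix (Fin N) (Fin N) ℝ) :=
    Set.pi Set.univ fun _ => Set.pi Set.univ fun _ => Set.Icc (-(1 / κ)) (1 / κ)
  let P : Set (Matrix (Fin N) (Fin N) ℝ) := {A | ∀ I : Finset (Fin N), κ ≤ minorP A I}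
  have hB : IsCompact B :=
    isCompact_univ_pi fun _ => isCompact_univ_pi fun _ => isCompact_Icc
  have hentry : ∀ i j, Continuous fun A : Matrix (Fin N) (Fin N) ℝ => A i j :=
    fun i j => continuous_id.matrix_elem i j
  have hP : IsClosed P := by
    simp only [P, Set.ofPred_forall]
    refine isClosed_iInter fun I => isClosed_le continuous_const ?_
    exact Continuous.matrix_det (continuous_matrix fun i j => hentry i.1 j.1)
  have hK : IsCompact ((B ∩ P) ×ˢ stdSimplex ℝ (Fin N)) :=
    (hB.inter_right hP).prod (isCompact_stdSimplex ℝ (Fin N))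
  have hF : Continuous F := by
    refine continuous_finsetSum _ fun i _ => ?_
    refine Continuous.min (by fun_prop) (Continuous.abs (continuous_finsetSum _ fun j _ => ?_))
    exact ((hentry i j).comp continuous_fst).mul (by fun_prop)
  obtain ⟨c, hc, hcF⟩ := hK.exists_forall_le' hF.continuousOn (a := 0) (by
    rintro ⟨A, w⟩ ⟨⟨_, hA⟩, hw⟩
    exact sum_min_pos A (fun I => (hκ.trans_le (hA I)).ne') w hw)
  have hN' : (0 : ℝ) < N := by exact_mod_cast hN
  refine ⟨c / N, by positivity, fun A u hA hAP hu => ?_⟩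
  rcases (Finset.sum_nonneg fun j (_ : j ∈ Finset.univ) => hu j).eq_or_lt with h0 | hR
  · refine ⟨⟨0, hN⟩, ?_, ?_⟩ <;> rw [← h0, mul_zero]
    exacts [hu _, abs_nonneg _]
  set R := ∑ j, u j with hRdef
  have hmem : (A, fun i => u i / R) ∈ (B ∩ P) ×ˢ stdSimplex ℝ (Fin N) := by
    refine ⟨⟨fun i _ j _ => abs_le.1 (hA i j), hAP⟩, fun i => div_nonneg (hu i) hR.le, ?_⟩
    rw [← Finset.sum_div, ← hRdef, div_self hR.ne']
  have hle := hcF _ hmem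
  -- a sum of `N` terms that is at least `c` has a term that is at least `c / N`
  obtain ⟨i, -, hi⟩ := Finset.exists_le_of_sum_le (s := Finset.univ) (f := fun _ : Fin N => c / N)
    (g := fun i => min (u i / R) |∑ j, A i j * (u j / R)|) ⟨⟨0, hN⟩, Finset.mem_univ _⟩ (by
      have : ∑ _i : Fin N, c / N = c := by
        simp; field_simp
      rw [this]; exact hle)
  refine ⟨i, (le_div_iff₀ hR).1 (hi.trans (min_le_left _ _)), ?_⟩
  have h2 := hi.trans (min_le_right _ _)
  have h3 : ∑ j, A i j * (u j / R) = (∑ j, A i j * u j) / R := by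
    rw [Finset.sum_div]; exact Finset.sum_congr rfl fun j _ => by ring
  rw [h3, abs_div, abs_of_pos hR] at h2
  exact (le_div_iff₀ hR).1 h2

/-- Uniform bound on `g` at every point where `∑ i, u_i |f_i|^p ≤ g`. -/
lemma gBound {N : ℕ} (hN : 0 < N) {p κ : ℝ} (hp : 1 ≤ p) (hκ : 0 < κ) :
    ∃ C : ℝ, 0 ≤ C ∧ ∀ (A : Matrix (Fin N) (Fin N) ℝ) (m u : Fin N → ℝ), IsAdmissible κ A m →
      (∀ i, 0 ≤ u i) → ∑ i, u i * |fComp A m u i| ^ p ≤ ∑ i, |fComp A m u i| ^ p →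
      ∑ i, |fComp A m u i| ^ p ≤ C := by
  obtain ⟨δ, hδ, H⟩ := exists_index_large hN hκ
  have hp0 : 0 ≤ p := by linarith
  set R₀ : ℝ := max (max 1 (2 / (κ * δ))) (N * (2 / κ) ^ p / (δ * (δ / 2) ^ p)) with hR₀
  have hR₀1 : 1 ≤ R₀ := (le_max_left _ _).trans (le_max_left _ _)
  refine ⟨N * (2 * R₀ / κ) ^ p, by positivity, fun A m u hadm hu hle => ?_⟩
  obtain ⟨hA, hm, hP, hM⟩ := hadm
  set R := ∑ j, u j with hR
  have hR0 : 0 ≤ R := Finset.sum_nonneg fun j _ => hu j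
  -- the lower bound on `m` is the case `I = ∅` of the bordered determinants
  have hm0 : ∀ i, 0 ≤ m i := by
    intro i
    have h := hM ∅ i (by simp)
    have h2 : minorM A m ∅ i = m i := by
      unfold minorM
      rw [Matrix.det_unique]
      rfl
    linarith
  have hf : ∀ r, 1 ≤ r → R ≤ r → ∀ i, |fComp A m u i| ≤ 2 * r / κ := by
    intro r hr hRr i
    have h1 : |∑ j, A i j * u j| ≤ 1 / κ * R := by
      rw [hR, Finset.mul_sum]
      refine (Finset.abs_sum_le_sum_abs _ _).trans (Finset.sum_le_sum fun j _ => ?_)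
      rw [abs_mul, abs_of_nonneg (hu j)]
      exact mul_le_mul_of_nonneg_right (hA i j) (hu j)
    have h2 : |m i| ≤ 1 / κ := by rw [abs_of_nonneg (hm0 i)]; exact hm i
    calc |fComp A m u i| ≤ |m i| + |∑ j, A i j * u j| := abs_sub _ _
      _ ≤ 1 / κ * r + 1 / κ * r := by
          refine add_le_add (h2.trans (le_mul_of_one_le_right (by positivity) hr)) (h1.trans ?_)
          exact mul_le_mul_of_nonneg_left hRr (by positivity)
      _ = 2 * r / κ := by ring
  have hg : ∀ r, 1 ≤ r → R ≤ r → ∑ i, |fComp A m u i| ^ p ≤ N * (2 * r / κ) ^ p := by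
    intro r hr hRr
    calc ∑ i, |fComp A m u i| ^ p ≤ ∑ _i : Fin N, (2 * r / κ) ^ p :=
          Finset.sum_le_sum fun i _ => Real.rpow_le_rpow (abs_nonneg _) (hf r hr hRr i) hp0
      _ = N * (2 * r / κ) ^ p := by simp
  refine hg R₀ hR₀1 ?_
  by_contra! hlt
  have hR1 : 1 < R := hR₀1.trans_lt hlt
  have hR2 : 2 / (κ * δ) < R := ((le_max_right _ _).trans (le_max_left _ _)).trans_lt hlt
  have hR3 : N * (2 / κ) ^ p / (δ * (δ / 2) ^ p) < R := (le_max_right _ _).trans_lt hlt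
  obtain ⟨i, hi1, hi2⟩ := H A u hA hP hu
  have hfi : δ / 2 * R ≤ |fComp A m u i| := by
    have h1 : |∑ j, A i j * u j| - |m i| ≤ |fComp A m u i| := by
      have := abs_sub_abs_le_abs_sub (∑ j, A i j * u j) (m i)
      rwa [abs_sub_comm] at this
    have h2 : |m i| ≤ 1 / κ := by rw [abs_of_nonneg (hm0 i)]; exact hm i
    have h3 : 1 / κ ≤ δ / 2 * R := by
      rw [div_lt_iff₀ (by positivity)] at hR2
      rw [div_le_iff₀ hκ]
      nlinarith
    rw [← hR] at hi2
    linarith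
  have hlow : δ * R * (δ / 2 * R) ^ p ≤ ∑ i, u i * |fComp A m u i| ^ p := by
    refine le_trans ?_ (Finset.single_le_sum (f := fun i => u i * |fComp A m u i| ^ p)
      (fun j _ => mul_nonneg (hu j) (by positivity)) (Finset.mem_univ i))
    exact mul_le_mul hi1 (Real.rpow_le_rpow (by positivity) hfi hp0) (by positivity) (hu i)
  have hup := hlow.trans (hle.trans (hg R hR1.le le_rfl))
  rw [show 2 * R / κ = 2 / κ * R by ring, Real.mul_rpow (by positivity) hR0,
    Real.mul_rpow (by positivity) hR0] at hup
  have hRp : 0 < R ^ p := Real.rpow_pos_of_pos (by linarith) p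
  have h4 : R * (δ * (δ / 2) ^ p) ≤ N * (2 / κ) ^ p := by
    refine le_of_mul_le_mul_right ?_ hRp
    linarith
  have h5 : 0 < δ * (δ / 2) ^ p := by positivity
  rw [div_lt_iff₀ h5] at hR3
  linarith

/-- The measure-theoretic step for a single index `n`: `g` and `h` are as in the overview above, and `C` bounds
`g` off the set `{ε g < h}`. -/
lemma measure_bound {α : Type*} [MeasurableSpace α] {μ : Measure α} {g h : α → ℝ} {Ω : Set α}
    (hΩf : μ Ω ≠ ⊤) (hgm : Measurable g) (hhm : Measurable h)
    {ε C a : ℝ} (hε : 0 < ε) (hε2 : ε ≤ 1 / 2) (hC : 0 ≤ C) (ha : 0 < a)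
    (hgC : ∀ x ∈ Ω, h x ≤ ε * g x → g x ≤ C)
    (hgint : ∫⁻ x in Ω, ENNReal.ofReal (g x) ∂μ < ⊤)
    (hmain : ∫⁻ x in Ω, ENNReal.ofReal (h x) ∂μ ≤
      ENNReal.ofReal (ε ^ 2) * ∫⁻ x in Ω, ENNReal.ofReal (g x) ∂μ) :
    μ (Ω ∩ {x | ε * g x < h x} ∩ {x | a < g x}) ≤
      ENNReal.ofReal (ε * (2 * C * (μ Ω).toReal / a)) := by
  set G := ∫⁻ x in Ω, ENNReal.ofReal (g x) ∂μ with hG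
  set T : Set α := {x | ε * g x < h x} with hT
  have hTm : MeasurableSet T := measurableSet_lt (hgm.const_mul ε) hhm
  set J := ∫⁻ x in Ω ∩ T, ENNReal.ofReal (g x) ∂μ with hJ
  have h1 : ENNReal.ofReal ε * J ≤ ENNReal.ofReal (ε ^ 2) * G := by
    refine le_trans ?_ hmain
    rw [hJ, ← lintegral_const_mul _ hgm.ennreal_ofReal]
    refine le_trans (setLIntegral_mono hhm.ennreal_ofReal fun x hx => ?_)
      (lintegral_mono_set Set.inter_subset_left)
    rw [← ENNReal.ofReal_mul hε.le]
    exact ENNReal.ofReal_le_ofReal (le_of_lt hx.2)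
  have hsplit : J + ∫⁻ x in Ω \ T, ENNReal.ofReal (g x) ∂μ = G :=
    lintegral_inter_add_sdiff _ Ω hTm
  have h2 : ∫⁻ x in Ω \ T, ENNReal.ofReal (g x) ∂μ ≤ ENNReal.ofReal C * μ Ω := by
    refine le_trans (setLIntegral_mono (g := fun _ => ENNReal.ofReal C) measurable_const
      fun x hx => ENNReal.ofReal_le_ofReal (hgC x hx.1 (not_lt.1 hx.2))) ?_
    rw [setLIntegral_const]
    gcongr
    exact Set.sdiff_subset
  have h3 : ENNReal.ofReal a * μ (Ω ∩ T ∩ {x | a < g x}) ≤ J := by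
    rw [hJ, ← setLIntegral_const]
    refine le_trans (setLIntegral_mono hgm.ennreal_ofReal fun x hx =>
      ENNReal.ofReal_le_ofReal (le_of_lt hx.2)) (lintegral_mono_set Set.inter_subset_left)
  have hJf : J ≠ ⊤ := ((hsplit ▸ le_self_add : J ≤ G).trans_lt hgint).ne
  have h1' : ε * J.toReal ≤ ε ^ 2 * G.toReal := by
    have := ENNReal.toReal_mono (ENNReal.mul_ne_top ENNReal.ofReal_ne_top hgint.ne) h1
    rwa [ENNReal.toReal_mul, ENNReal.toReal_mul, ENNReal.toReal_ofReal hε.le,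
      ENNReal.toReal_ofReal (by positivity)] at this
  have hJG : J.toReal ≤ ε * G.toReal := by
    refine le_of_mul_le_mul_left ?_ hε
    linarith
  have h2' : G.toReal ≤ J.toReal + C * (μ Ω).toReal := by
    have hle : G ≤ J + ENNReal.ofReal C * μ Ω := hsplit ▸ add_le_add_right h2 J
    have hCf : ENNReal.ofReal C * μ Ω ≠ ⊤ := ENNReal.mul_ne_top ENNReal.ofReal_ne_top hΩf
    have := ENNReal.toReal_mono (ENNReal.add_ne_top.2 ⟨hJf, hCf⟩) hle
    rwa [ENNReal.toReal_add hJf hCf, ENNReal.toReal_mul, ENNReal.toReal_ofReal hC] at this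
  have hG0 : 0 ≤ G.toReal := ENNReal.toReal_nonneg
  have hG2 : G.toReal ≤ 2 * C * (μ Ω).toReal := by nlinarith
  have hSf : μ (Ω ∩ T ∩ {x | a < g x}) ≠ ⊤ :=
    ((measure_mono (Set.inter_subset_left.trans Set.inter_subset_left)).trans_lt
      hΩf.lt_top).ne
  rw [← ENNReal.ofReal_toReal hSf]
  refine ENNReal.ofReal_le_ofReal ?_
  have h3' := ENNReal.toReal_mono hJf h3
  rw [ENNReal.toReal_mul, ENNReal.toReal_ofReal ha.le] at h3'
  rw [← mul_div_assoc, le_div_iff₀ ha]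
  have := mul_le_mul_of_nonneg_left hG2 hε.le
  linarith

/-- In the sequence setup, for every `a > 0`,
`|{v_n > ε_n} ∩ {g_n > a}| → 0` as `n → ∞`. -/
theorem measure_vn_gt_eps_inter_gn_gt_a_tendsto_zero {d N : ℕ} (hN : 0 < N)
    (p κ : ℝ) (hp : 1 ≤ p) (hκ : 0 < κ)
    (Ω : Set (Fin d → ℝ)) (hΩo : IsOpen Ω) (hΩb : Bornology.IsBounded Ω)
    (A : ℕ → (Fin d → ℝ) → Matrix (Fin N) (Fin N) ℝ)
    (m : ℕ → (Fin d → ℝ) → Fin N → ℝ)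
    (u : ℕ → (Fin d → ℝ) → Fin N → ℝ)
    (hAmeas : ∀ n i j, Measurable fun x => A n x i j)
    (hmmeas : ∀ n i, Measurable fun x => m n x i)
    (humeas : ∀ n i, Measurable fun x => u n x i)
    (hadm : ∀ n, ∀ x ∈ Ω, IsAdmissible κ (A n x) (m n x))
    (hu0 : ∀ n, ∀ x ∈ Ω, ∀ i, 0 ≤ u n x i)
    (eps : ℕ → ℝ) (heps : ∀ n, eps n ∈ Set.Ioo (0 : ℝ) 1)
    (hepslim : Tendsto eps atTop (nhds 0))
    (hgint : ∀ n, ∫⁻ x in Ω, ENNReal.ofReal (gSeq (A n) (m n) (u n) p x) < ⊤)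
    (hmain : ∀ n,
      ∫⁻ x in Ω, ENNReal.ofReal (∑ i, u n x i * |fSeq (A n) (m n) (u n) x i| ^ p) ≤
        ENNReal.ofReal (eps n ^ 2) *
          ∫⁻ x in Ω, ENNReal.ofReal (gSeq (A n) (m n) (u n) p x)) :
    ∀ a : ℝ, 0 < a →
      Tendsto (fun n => volume ({x ∈ Ω | eps n < vSeq (A n) (m n) (u n) p x} ∩
          {x ∈ Ω | a < gSeq (A n) (m n) (u n) p x})) atTop (nhds 0) := by
  intro a ha
  obtain ⟨C, hC, hCb⟩ := gBound hN hp hκ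
  have hlim : Tendsto (fun n => ENNReal.ofReal (eps n * (2 * C * (volume Ω).toReal / a)))
      atTop (nhds 0) := by
    have h := ENNReal.tendsto_ofReal (hepslim.mul_const (2 * C * (volume Ω).toReal / a))
    simpa using h
  refine tendsto_of_tendsto_of_tendsto_of_le_of_le' tendsto_const_nhds hlim
    (Eventually.of_forall fun _ => zero_le) ?_
  filter_upwards [hepslim.eventually (eventually_le_nhds (show (0 : ℝ) < 1 / 2 by norm_num))]
    with n hn
  have hfm : ∀ i, Measurable fun x => |fSeq (A n) (m n) (u n) x i| ^ p := by
    intro i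
    have h : Measurable fun x => fSeq (A n) (m n) (u n) x i :=
      (hmmeas n i).sub (Finset.measurable_sum _ fun j _ => (hAmeas n i j).mul (humeas n j))
    exact (measurable_norm.comp h).pow_const p
  have hgm : Measurable (gSeq (A n) (m n) (u n) p) := Finset.measurable_sum _ fun i _ => hfm i
  have hhm : Measurable fun x => ∑ i, u n x i * |fSeq (A n) (m n) (u n) x i| ^ p :=
    Finset.measurable_sum _ fun i _ => (humeas n i).mul (hfm i)
  have hg0 : ∀ x, 0 ≤ gSeq (A n) (m n) (u n) p x := fun x =>
    Finset.sum_nonneg fun i _ => by positivity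
  refine le_trans (measure_mono ?_) (measure_bound hΩb.measure_lt_top.ne hgm hhm
    (heps n).1 hn hC ha (fun x hx hle => ?_) (hgint n) (hmain n))
  · rintro x ⟨⟨hx, hv⟩, -, hxa⟩
    have hpos : 0 < gSeq (A n) (m n) (u n) p x := ha.trans hxa
    refine ⟨⟨hx, ?_⟩, hxa⟩
    rw [vSeq, if_neg hpos.ne', lt_div_iff₀ hpos] at hv
    exact hv
  · exact hCb _ _ _ (hadm n x hx) (hu0 n x hx)
      (hle.trans (mul_le_of_le_one_left (hg0 x) (heps n).2.le))
end
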